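/- For every graph G in Cact(n;t) with n ≥ 7 and t ≥ 1 that is not isomorphic to G⁰(n,t), it holds that D_R(G) ≥ −(4/3)t² + ((4/3)n − 13/3)t + 3n² − (16/3)n − 19/3, with equality if and only if G is isomorphic to G5. -/

import Mathlib

open Finset

/-- Effective resistance between two vertices of a graph (for a connected graph
this is the effective resistance when every edge is a unit resistor), defined via
the matrix-tree / spanning-two-forest determinant formula. -/
noncomputable def effRes {V : Type*} [Finite V] (G : SimpleGraph V) (u v : V) : ℝ :=
  letI := Fintype.ofFinite V
  letI := Classical.decEq V
  letI : DecidableRel G.Adj := Classical.decRel _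
  if u = v then 0
  else
    Matrix.det ((G.lapMatrix ℝ).submatrix
        (fun w : {w : V // w ≠ u ∧ w ≠ v} => (w : V)) (fun w => (w : V)))
      / Matrix.det ((G.lapMatrix ℝ).submatrix
        (fun w : {w : V // w ≠ u} => (w : V)) (fun w => (w : V)))

/-- The degree resistance distance `D_R(G) = Σ_{ {u,v} ⊆ V } (d(u)+d(v)) R(u,v)`. -/
noncomputable def degRes {V : Type*} [Finite V] (G : SimpleGraph V) : ℝ :=
  letI := Fintype.ofFinite V
  letI := Classical.decEq V
  letI : DecidableRel G.Adj := Classical.decRel _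
  (1 / 2) * ∑ u : V, ∑ v : V, ((G.degree u : ℝ) + (G.degree v : ℝ)) * effRes G u v

/-- The Kirchhoff index `Kf(G) = Σ_{ {u,v} ⊆ V } R(u,v)`. -/
noncomputable def kirchhoffIndex {V : Type*} [Finite V] (G : SimpleGraph V) : ℝ :=
  letI := Fintype.ofFinite V
  (1 / 2) * ∑ u : V, ∑ v : V, effRes G u v

/-- `Kf_v(G) = Σ_{u ∈ V} R(u,v)`. -/
noncomputable def Kfv {V : Type*} [Finite V] (G : SimpleGraph V) (v : V) : ℝ :=
  letI := Fintype.ofFinite V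
  ∑ u : V, effRes G u v

/-- `D_v(G) = Σ_{u ∈ V} d(u) R(u,v)`. -/
noncomputable def Dv {V : Type*} [Finite V] (G : SimpleGraph V) (v : V) : ℝ :=
  letI := Fintype.ofFinite V
  letI := Classical.decEq V
  letI : DecidableRel G.Adj := Classical.decRel _
  ∑ u : V, (G.degree u : ℝ) * effRes G u v

/-- A subgraph is a cycle if it is connected and `2`-regular. -/
def IsCycleSubgraph {V : Type*} {G : SimpleGraph V} (H : G.Subgraph) : Prop :=
  H.coe.Connected ∧ ∀ v ∈ H.verts, {u | H.Adj v u}.ncard = 2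

/-- A cactus is a connected graph in which any two distinct cycles share at most
one vertex (equivalently, every block is an edge or a cycle). -/
def IsCactus {V : Type*} (G : SimpleGraph V) : Prop :=
  G.Connected ∧ ∀ H₁ H₂ : G.Subgraph, IsCycleSubgraph H₁ → IsCycleSubgraph H₂ →
    H₁ ≠ H₂ → (H₁.verts ∩ H₂.verts).ncard ≤ 1

/-- The number of cycles of a graph. -/
noncomputable def numCycles {V : Type*} (G : SimpleGraph V) : ℕ :=
  {H : G.Subgraph | IsCycleSubgraph H}.ncard

/-- `G ∈ Cact(n;t)`: `G` is a cactus with `n` vertices and `t` cycles. -/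
def MemCact {V : Type*} (n t : ℕ) (G : SimpleGraph V) : Prop :=
  IsCactus G ∧ Nat.card V = n ∧ numCycles G = t

/-- `G⁰(n,t)`: `t` triangles (on vertices `2i+1, 2i+2`, `i < t`) and `n - 2t - 1`
pendent edges, all sharing the common vertex `0`. -/
def G0 (n t : ℕ) : SimpleGraph (Fin n) :=
  SimpleGraph.fromRel (fun a b =>
    a.val = 0 ∨ (Odd a.val ∧ b.val = a.val + 1 ∧ b.val ≤ 2 * t))

/-- `G3`: `t` triangles, `n - 2t - 3` pendent edges, and one pendent path of
length 2 (through `2t+1` to `2t+2`), all attached at the common vertex `0`. -/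
def G3g (n t : ℕ) : SimpleGraph (Fin n) :=
  SimpleGraph.fromRel (fun a b =>
    (a.val = 0 ∧ b.val ≠ 2 * t + 2) ∨
    (Odd a.val ∧ b.val = a.val + 1 ∧ b.val ≤ 2 * t) ∨
    (a.val = 2 * t + 1 ∧ b.val = 2 * t + 2))

/-- `G4`: `t` triangles and `n - 2t - 2` pendent edges at the common vertex `0`,
together with one pendent edge (to `2t+1`) attached at the triangle vertex `1`. -/
def G4g (n t : ℕ) : SimpleGraph (Fin n) :=
  SimpleGraph.fromRel (fun a b =>
    (a.val = 0 ∧ b.val ≠ 2 * t + 1) ∨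
    (Odd a.val ∧ b.val = a.val + 1 ∧ b.val ≤ 2 * t) ∨
    (a.val = 1 ∧ b.val = 2 * t + 1))

/-- `G5`: `t - 1` triangles, one quadrilateral `C₄` (on `0, 2t-1, 2t, 2t+1`), and
`n - 2t - 2` pendent edges, all sharing the common vertex `0`. -/
def G5g (n t : ℕ) : SimpleGraph (Fin n) :=
  SimpleGraph.fromRel (fun a b =>
    (a.val = 0 ∧ b.val ≠ 2 * t) ∨
    (Odd a.val ∧ b.val = a.val + 1 ∧ b.val ≤ 2 * t - 2) ∨
    (a.val = 2 * t - 1 ∧ b.val = 2 * t) ∨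
    (a.val = 2 * t ∧ b.val = 2 * t + 1))

/-- `G6`: `t - 1` triangles, one quadrilateral `C₄` (on `0, 2t-1, 2t, 2t+1`), and
`n - 2t - 3` pendent edges at the common vertex `0`, together with one pendent edge
(to `2t+2`) attached at the quadrilateral vertex `2t-1`, which is adjacent to `0`. -/
def G6g (n t : ℕ) : SimpleGraph (Fin n) :=
  SimpleGraph.fromRel (fun a b =>
    (a.val = 0 ∧ b.val ≠ 2 * t ∧ b.val ≠ 2 * t + 2) ∨
    (Odd a.val ∧ b.val = a.val + 1 ∧ b.val ≤ 2 * t - 2) ∨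
    (a.val = 2 * t - 1 ∧ (b.val = 2 * t ∨ b.val = 2 * t + 2)) ∨
    (a.val = 2 * t ∧ b.val = 2 * t + 1))

/-- `G7`: `t - 1` triangles, one quadrilateral `C₄` (on `0, 2t-1, 2t, 2t+1`), and
`n - 2t - 3` pendent edges at the common vertex `0`, together with one pendent edge
(to `2t+2`) attached at the quadrilateral vertex `2t`, which is opposite to `0`. -/
def G7g (n t : ℕ) : SimpleGraph (Fin n) :=
  SimpleGraph.fromRel (fun a b =>
    (a.val = 0 ∧ b.val ≠ 2 * t ∧ b.val ≠ 2 * t + 2) ∨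
    (Odd a.val ∧ b.val = a.val + 1 ∧ b.val ≤ 2 * t - 2) ∨
    (a.val = 2 * t - 1 ∧ b.val = 2 * t) ∨
    (a.val = 2 * t ∧ (b.val = 2 * t + 1 ∨ b.val = 2 * t + 2)))

/-- `G8`: `t - 2` triangles, two quadrilaterals `C₄` (on `0, 2t-3, 2t-2, 2t-1` and
on `0, 2t, 2t+1, 2t+2`), and `n - 2t - 3` pendent edges, all sharing the common
vertex `0`. -/
def G8g (n t : ℕ) : SimpleGraph (Fin n) :=
  SimpleGraph.fromRel (fun a b =>
    (a.val = 0 ∧ b.val ≠ 2 * t - 2 ∧ b.val ≠ 2 * t + 1) ∨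
    (Odd a.val ∧ b.val = a.val + 1 ∧ b.val ≤ 2 * t - 4) ∨
    (a.val = 2 * t - 3 ∧ b.val = 2 * t - 2) ∨
    (a.val = 2 * t - 2 ∧ b.val = 2 * t - 1) ∨
    (a.val = 2 * t ∧ b.val = 2 * t + 1) ∨
    (a.val = 2 * t + 1 ∧ b.val = 2 * t + 2))

/-- `G9`: `t - 1` triangles, one quadrilateral `C₄` (on `0, 2t-1, 2t, 2t+1`), and
`n - 2t - 3` pendent edges at the common vertex `0`, together with one pendent edge
(to `2t+2`) attached at the non-central triangle vertex `1`. -/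
def G9g (n t : ℕ) : SimpleGraph (Fin n) :=
  SimpleGraph.fromRel (fun a b =>
    (a.val = 0 ∧ b.val ≠ 2 * t ∧ b.val ≠ 2 * t + 2) ∨
    (Odd a.val ∧ b.val = a.val + 1 ∧ b.val ≤ 2 * t - 2) ∨
    (a.val = 2 * t - 1 ∧ b.val = 2 * t) ∨
    (a.val = 2 * t ∧ b.val = 2 * t + 1) ∨
    (a.val = 1 ∧ b.val = 2 * t + 2))

/-- `G10`: `t - 1` triangles, one pentagon `C₅` (on `0, 2t-1, 2t, 2t+1, 2t+2`), and
`n - 2t - 3` pendent edges, all sharing the common vertex `0`. -/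
def G10g (n t : ℕ) : SimpleGraph (Fin n) :=
  SimpleGraph.fromRel (fun a b =>
    (a.val = 0 ∧ b.val ≠ 2 * t ∧ b.val ≠ 2 * t + 1) ∨
    (Odd a.val ∧ b.val = a.val + 1 ∧ b.val ≤ 2 * t - 2) ∨
    (a.val = 2 * t - 1 ∧ b.val = 2 * t) ∨
    (a.val = 2 * t ∧ b.val = 2 * t + 1) ∨
    (a.val = 2 * t + 1 ∧ b.val = 2 * t + 2))

/-!
Effective resistance in a cactus is additive along blocks: each block is a retract of the graph, and
the resistance between two vertices is the sum over the blocks of the resistances between their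
projections. Counting the pairs of vertices that project to a given pair of vertices of a block
gives `degRes G = (3n + 2t - 4)(n - 1) + ∑ excess + ∑ interaction`: a cycle of length `r + 1`
contributes the excess `cycleExcess n t r`, and a block contributes a nonnegative interaction
between the parts of the graph that hang off its different vertices. The excess is smallest for a
triangle and second smallest for a quadrilateral.

The interactions all vanish exactly when the blocks share a vertex. Then `G` is determined by the
lengths of its cycles, and as `G` is not `G0 n t`, one of them is not a triangle; the best choice is
a single quadrilateral. Otherwise some block has something hanging off two of its vertices. Its
interaction is positive, which suffices if some cycle is not a triangle; if all are triangles, it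
exceeds the difference of the excesses of a quadrilateral and a triangle.
-/

section MatrixLemmas

open Matrix

variable {m R : Type*} [Fintype m]

theorem submatrix_val_mulVec [NonUnitalNonAssocSemiring R] {p : m → Prop} [DecidablePred p]
    (A : Matrix m m R) {x : m → R} (hx : ∀ i, ¬ p i → x i = 0) :
    A.submatrix (Subtype.val : Subtype p → m) (Subtype.val : Subtype p → m)
      *ᵥ (x ∘ Subtype.val) = (A *ᵥ x) ∘ Subtype.val := by
  ext i
  have hcompl : ∑ j : {j // ¬ p j}, A i j * x j = 0 :=
    sum_eq_zero fun j _ => by rw [hx j j.2, mul_zero]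
  simpa [mulVec, dotProduct, hcompl] using
    Fintype.sum_subtype_add_sum_subtype p fun j => A i j * x j

theorem adjugate_diag_eq_det_submatrix [DecidableEq m] [CommRing R] (A : Matrix m m R) (i : m) :
    A.adjugate i i = (A.submatrix (Subtype.val : {j // j ≠ i} → m) Subtype.val).det := by
  set B := A.updateRow i (Pi.single i 1) with hB
  have hone : toSquareBlockProp B (· = i) = 1 := by
    ext ⟨a, rfl⟩ ⟨b, rfl⟩
    simp [toSquareBlockProp_def, hB]
  have hrest : toSquareBlockProp B (¬ · = i)
      = A.submatrix (Subtype.val : {j // j ≠ i} → m) Subtype.val := by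
    ext a b
    simp [toSquareBlockProp_def, hB, updateRow_ne a.2]
  have hzero : ∀ a, a = i → ∀ b, ¬ b = i → B a b = 0 := by
    rintro a rfl b hb
    simp [hB, hb]
  have hdet := twoBlockTriangular_det' B (· = i) hzero
  rw [hrest] at hdet
  rw [adjugate_apply, hdet]
  convert one_mul _
  convert (det_one : (1 : Matrix {a // a = i} {a // a = i} R).det = 1)

end MatrixLemmas

section Resistance

open Matrix

variable {V : Type*} {G : SimpleGraph V}

section Grounded

variable [Fintype V] [DecidableEq V] [DecidableRel G.Adj]

variable (G) in
/-- The Laplacian of `G` grounded at `u`: the row and the column of `u` are deleted. -/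
def groundedLaplacian (u : V) : Matrix {w // w ≠ u} {w // w ≠ u} ℝ :=
  (G.lapMatrix ℝ).submatrix Subtype.val Subtype.val

theorem groundedLaplacian_mulVec {u : V} {x : V → ℝ} (hx : x u = 0) :
    groundedLaplacian G u *ᵥ (x ∘ Subtype.val) = (G.lapMatrix ℝ *ᵥ x) ∘ Subtype.val :=
  submatrix_val_mulVec _ fun i hi => by rwa [not_not.mp hi]

theorem det_groundedLaplacian_ne_zero (hG : G.Connected) (u : V) :
    (groundedLaplacian G u).det ≠ 0 := by
  intro hdet
  obtain ⟨y, hy, hker⟩ := exists_mulVec_eq_zero_iff.mpr hdet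
  set x : V → ℝ := Function.extend Subtype.val y 0 with hx
  have hxy : x ∘ Subtype.val = y := Function.extend_comp Subtype.val_injective y 0
  have hxu : x u = 0 := Function.extend_apply' _ _ _ (by simp)
  rw [← hxy, groundedLaplacian_mulVec hxu] at hker
  have henergy : toLinearMap₂' ℝ (G.lapMatrix ℝ) x x = 0 := by
    rw [toLinearMap₂'_apply']
    refine sum_eq_zero fun w _ => ?_
    obtain rfl | hw := eq_or_ne w u
    · rw [hxu, zero_mul]
    · rw [show (G.lapMatrix ℝ *ᵥ x) w = 0 from congrFun hker ⟨w, hw⟩, mul_zero]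
  rw [SimpleGraph.lapMatrix_toLinearMap₂'_apply'_eq_zero_iff_forall_reachable] at henergy
  refine hy (funext fun w => ?_)
  rw [← hxy, Function.comp_apply, henergy w u (hG.preconnected _ _), hxu, Pi.zero_apply]

theorem effRes_eq_inv_groundedLaplacian {u v : V} (hvu : v ≠ u) :
    effRes G u v = (groundedLaplacian G u)⁻¹ ⟨v, hvu⟩ ⟨v, hvu⟩ := by
  let e : {w : {w // w ≠ u} // w ≠ ⟨v, hvu⟩} ≃ {w // w ≠ u ∧ w ≠ v} :=
    (Equiv.subtypeEquivRight fun w => by simp [Subtype.ext_iff]).trans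
      (Equiv.subtypeSubtypeEquivSubtypeInter (· ≠ u) (· ≠ v))
  have hnum : (groundedLaplacian G u).adjugate ⟨v, hvu⟩ ⟨v, hvu⟩
      = ((G.lapMatrix ℝ).submatrix (Subtype.val : {w // w ≠ u ∧ w ≠ v} → V) Subtype.val).det := by
    rw [adjugate_diag_eq_det_submatrix, ← det_submatrix_equiv_self e]
    rfl
  rw [Matrix.inv_def, Ring.inverse_eq_inv', Matrix.smul_apply, hnum, smul_eq_mul,
    ← div_eq_inv_mul, effRes, if_neg hvu.symm, groundedLaplacian]
  congr!

end Grounded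

/-- `φ` is an electric potential driving a unit current from `u` to `v` through `G`, each edge
being a unit resistor. -/
def IsUnitPotential [Finite V] (G : SimpleGraph V) (φ : V → ℝ) (u v : V) : Prop :=
  letI := Fintype.ofFinite V
  letI := Classical.decEq V
  letI : DecidableRel G.Adj := Classical.decRel _
  G.lapMatrix ℝ *ᵥ φ = Pi.single u 1 - Pi.single v 1

theorem isUnitPotential_iff_lapMatrix_mulVec [Fintype V] [DecidableEq V] [DecidableRel G.Adj]
    {φ : V → ℝ} {u v : V} :
    IsUnitPotential G φ u v ↔ G.lapMatrix ℝ *ᵥ φ = Pi.single u 1 - Pi.single v 1 := by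
  unfold IsUnitPotential
  convert Iff.rfl

theorem isUnitPotential_iff_sum [Fintype V] [DecidableEq V] [DecidableRel G.Adj]
    {φ : V → ℝ} {u v : V} : IsUnitPotential G φ u v ↔
      ∀ w, ∑ x ∈ G.neighborFinset w, (φ w - φ x)
        = (if w = u then 1 else 0) - (if w = v then 1 else 0) := by
  simp only [isUnitPotential_iff_lapMatrix_mulVec, funext_iff, SimpleGraph.lapMatrix_mulVec_apply,
    Pi.sub_apply, Pi.single_apply, sum_sub_distrib, sum_const, nsmul_eq_mul,
    SimpleGraph.card_neighborFinset_eq_degree]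

variable [Finite V] {u v : V} {φ : V → ℝ}

theorem effRes_self (G : SimpleGraph V) (u : V) : effRes G u u = 0 := by
  simp [effRes]

theorem IsUnitPotential.effRes_eq (hG : G.Connected) (hφ : IsUnitPotential G φ u v) :
    effRes G u v = φ u - φ v := by
  classical
  cases nonempty_fintype V
  obtain rfl | hvu := eq_or_ne v u
  · rw [effRes_self, sub_self]
  rw [isUnitPotential_iff_lapMatrix_mulVec] at hφ
  have hconst : G.lapMatrix ℝ *ᵥ (fun _ => φ u) = 0 := by
    ext w
    simp [SimpleGraph.lapMatrix_mulVec_apply]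
  have hsolve : groundedLaplacian G u *ᵥ ((fun w => φ u - φ w) ∘ Subtype.val)
      = Pi.single ⟨v, hvu⟩ 1 := by
    rw [groundedLaplacian_mulVec (x := fun w => φ u - φ w) (sub_self _)]
    ext w
    have := congrFun (mulVec_sub (G.lapMatrix ℝ) (fun _ => φ u) φ) w
    rw [hconst, hφ] at this
    simpa [Pi.single_apply, w.2, Subtype.ext_iff, Pi.sub_def] using this
  have hinv := congrFun (congrArg ((groundedLaplacian G u)⁻¹ *ᵥ ·) hsolve) ⟨v, hvu⟩
  simp only [mulVec_mulVec, nonsing_inv_mul _ (det_groundedLaplacian_ne_zero hG u).isUnit,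
    one_mulVec, mulVec_single_one] at hinv
  rw [effRes_eq_inv_groundedLaplacian hvu]
  exact hinv.symm

theorem exists_isUnitPotential (hG : G.Connected) (u v : V) : ∃ φ, IsUnitPotential G φ u v := by
  classical
  cases nonempty_fintype V
  let b : V → ℝ := Pi.single u 1 - Pi.single v 1
  let φ : V → ℝ := Function.extend Subtype.val ((groundedLaplacian G v)⁻¹ *ᵥ (b ∘ Subtype.val)) 0
  have hφ : φ ∘ Subtype.val = (groundedLaplacian G v)⁻¹ *ᵥ (b ∘ Subtype.val) :=
    Function.extend_comp Subtype.val_injective _ _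
  have hφv : φ v = 0 := Function.extend_apply' _ _ _ (by simp)
  have hoff : ∀ w ≠ v, (G.lapMatrix ℝ *ᵥ φ) w = b w := by
    intro w hw
    have := groundedLaplacian_mulVec (G := G) hφv
    rw [hφ, mulVec_mulVec, mul_nonsing_inv _ (det_groundedLaplacian_ne_zero hG v).isUnit,
      one_mulVec] at this
    exact (congrFun this ⟨w, hw⟩).symm
  -- Both sides of the missing equation are determined by the others, since both sum to zero.
  have hsum : ∑ w, (G.lapMatrix ℝ *ᵥ φ) w = ∑ w, b w := by
    have hcol : 1 ᵥ* G.lapMatrix ℝ = 0 := by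
      rw [← mulVec_transpose, (G.isSymm_lapMatrix ℝ)]
      exact SimpleGraph.lapMatrix_mulVec_const_eq_zero G
    rw [← one_dotProduct, dotProduct_mulVec, hcol, zero_dotProduct]
    simp [b, sum_sub_distrib]
  refine ⟨φ, isUnitPotential_iff_lapMatrix_mulVec.mpr (funext fun w => ?_)⟩
  obtain rfl | hw := eq_or_ne w v
  · rw [← add_sum_erase _ _ (mem_univ w), ← add_sum_erase _ b (mem_univ w)] at hsum
    rw [sum_congr rfl fun x hx => hoff x (ne_of_mem_erase hx)] at hsum
    exact add_right_cancel hsum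
  · exact hoff w hw

theorem IsUnitPotential.neg (hφ : IsUnitPotential G φ u v) : IsUnitPotential G (-φ) v u := by
  classical
  cases nonempty_fintype V
  rw [isUnitPotential_iff_lapMatrix_mulVec] at hφ ⊢
  rw [mulVec_neg, hφ, neg_sub]

theorem effRes_comm (hG : G.Connected) (u v : V) : effRes G u v = effRes G v u := by
  obtain ⟨φ, hφ⟩ := exists_isUnitPotential hG u v
  rw [hφ.effRes_eq hG, hφ.neg.effRes_eq hG, Pi.neg_apply, Pi.neg_apply, neg_sub_neg]

theorem IsUnitPotential.comp_iso {W : Type*} [Finite W] {H : SimpleGraph W} {ψ : W → ℝ}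
    (e : G ≃g H) (hψ : IsUnitPotential H ψ (e u) (e v)) : IsUnitPotential G (ψ ∘ e) u v := by
  classical
  cases nonempty_fintype V
  cases nonempty_fintype W
  rw [isUnitPotential_iff_sum] at hψ ⊢
  intro w
  have := hψ (e w)
  simp only [SimpleGraph.neighborFinset_eq_filter, sum_filter, e.injective.eq_iff] at this ⊢
  rw [← this]
  exact Fintype.sum_equiv e.toEquiv _ _ fun x => by simp [e.map_adj_iff]

theorem effRes_iso {W : Type*} [Finite W] {H : SimpleGraph W} (e : G ≃g H) (hG : G.Connected)
    (u v : V) : effRes H (e u) (e v) = effRes G u v := by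
  have hH : H.Connected := e.connected_iff.mp hG
  obtain ⟨ψ, hψ⟩ := exists_isUnitPotential hH (e u) (e v)
  rw [hψ.effRes_eq hH, (hψ.comp_iso e).effRes_eq hG, Function.comp_apply, Function.comp_apply]

theorem degRes_eq_sum_degree_mul [Fintype V] [DecidableRel G.Adj] (hG : G.Connected) :
    degRes G = ∑ u, ∑ v, (G.degree u : ℝ) * effRes G u v := by
  have hswap : ∑ u, ∑ v, (G.degree v : ℝ) * effRes G u v
      = ∑ u, ∑ v, (G.degree u : ℝ) * effRes G u v := by
    rw [sum_comm]
    exact sum_congr rfl fun u _ => sum_congr rfl fun v _ => by rw [effRes_comm hG]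
  have hdef : degRes G
      = (1 / 2) * ∑ u, ∑ v, ((G.degree u : ℝ) + (G.degree v : ℝ)) * effRes G u v := by
    unfold degRes
    congr!
  simp only [hdef, add_mul, sum_add_distrib, hswap]
  ring

end Resistance

section CycleGraph

open SimpleGraph

/-- The effective resistance between two vertices of the cycle `C_{n+1}` at distance `d`: the two
arcs of `d` and `n + 1 - d` unit resistors are connected in parallel. -/
noncomputable def arcRes {n : ℕ} (d : Fin (n + 1)) : ℝ :=
  (d : ℝ) * ((n + 1 : ℝ) - d) / (n + 1)

variable {n : ℕ}

@[simp]
theorem arcRes_zero : arcRes (0 : Fin (n + 1)) = 0 := by simp [arcRes]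

theorem arcRes_neg (d : Fin (n + 1)) : arcRes (-d) = arcRes d := by
  obtain rfl | hd := eq_or_ne d 0
  · rw [neg_zero]
  · rw [arcRes, arcRes, Fin.val_neg, if_neg hd, Nat.cast_sub d.isLt.le]
    push_cast
    ring

theorem arcRes_add_one (d : Fin (n + 1)) :
    arcRes (d + 1) = ((d : ℝ) + 1) * (n - d) / (n + 1) := by
  rw [arcRes, Fin.val_add_one]
  split_ifs with hd
  · simp [hd]
  · push_cast
    ring

theorem arcRes_sub_one (d : Fin (n + 1)) :
    arcRes (d - 1) = ((d : ℝ) - 1) * (n + 2 - d) / (n + 1) + if d = 0 then 2 else 0 := by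
  rw [arcRes, Fin.coe_sub_one]
  split_ifs with hd
  · have : (n : ℝ) + 1 ≠ 0 := by positivity
    simp only [hd, Fin.val_zero, Nat.cast_zero]
    field_simp
    ring
  · rw [Nat.cast_sub (Nat.one_le_iff_ne_zero.mpr (Fin.val_ne_zero_iff.mpr hd))]
    push_cast
    ring

theorem arcRes_second_difference (d : Fin (n + 1)) :
    (arcRes d - arcRes (d - 1)) + (arcRes d - arcRes (d + 1))
      = 2 / (n + 1) - if d = 0 then 2 else 0 := by
  rw [arcRes_sub_one, arcRes_add_one, arcRes]
  ring

theorem two_thirds_le_arcRes {d : Fin (n + 3)} (hd : d ≠ 0) : 2 / 3 ≤ arcRes d := by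
  have hpos : (1 : ℝ) ≤ d := by
    exact_mod_cast Nat.one_le_iff_ne_zero.mpr (Fin.val_ne_zero_iff.mpr hd)
  have hlt : (d : ℝ) + 1 ≤ n + 3 := by exact_mod_cast d.isLt
  rw [arcRes, le_div_iff₀ (by positivity)]
  push_cast
  nlinarith [mul_nonneg (sub_nonneg.mpr hpos) (sub_nonneg.mpr hlt)]

theorem sum_arcRes : ∑ d : Fin (n + 1), arcRes d = (n : ℝ) * (n + 2) / 6 := by
  have hsum (m : ℕ) (k : ℝ) : ∑ d ∈ range m, (d : ℝ) * (k - d)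
      = k * (m * (m - 1)) / 2 - (m - 1) * m * (2 * m - 1) / 6 := by
    induction m with
    | zero => simp
    | succ m ih => rw [sum_range_succ, ih]; push_cast; ring
  have hne : (n : ℝ) + 1 ≠ 0 := by positivity
  simp only [arcRes, ← sum_div]
  rw [Fin.sum_univ_eq_sum_range fun d => (d : ℝ) * ((n + 1 : ℝ) - d), hsum]
  push_cast
  field_simp
  ring

theorem isUnitPotential_cycleGraph (u v : Fin (n + 3)) :
    IsUnitPotential (cycleGraph (n + 3)) (fun w => (arcRes (w - v) - arcRes (w - u)) / 2) u v := by
  refine isUnitPotential_iff_sum.mpr fun w => ?_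
  have hne : w - 1 ≠ w + 1 := by
    rw [Ne, sub_eq_iff_eq_add, add_assoc, left_eq_add, Fin.ext_iff, Fin.val_add]
    simp [Nat.mod_eq_of_lt]
  have hu := arcRes_second_difference (w - u)
  have hv := arcRes_second_difference (w - v)
  rw [cycleGraph_neighborFinset, sum_pair hne, sub_right_comm w 1 v, sub_right_comm w 1 u,
    add_sub_right_comm w 1 v, add_sub_right_comm w 1 u]
  simp only [sub_eq_zero] at hu hv
  split_ifs at hu hv ⊢ <;> linarith

theorem effRes_cycleGraph (u v : Fin (n + 3)) :
    effRes (cycleGraph (n + 3)) u v = arcRes (v - u) := by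
  rw [(isUnitPotential_cycleGraph u v).effRes_eq (cycleGraph_connected), sub_self, sub_self,
    arcRes_zero, ← neg_sub v u, arcRes_neg]
  ring

theorem cycleGraph_two_neighborFinset (w : Fin 2) :
    (cycleGraph 2).neighborFinset w = {w + 1} := by
  revert w
  decide

theorem effRes_cycleGraph_two {u v : Fin 2} (huv : u ≠ v) : effRes (cycleGraph 2) u v = 1 := by
  have hpot : IsUnitPotential (cycleGraph 2) (Pi.single u 1) u v := by
    rw [isUnitPotential_iff_sum]
    intro w
    rw [cycleGraph_two_neighborFinset, sum_singleton]
    fin_cases u <;> fin_cases v <;> fin_cases w <;> simp_all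
  rw [hpot.effRes_eq cycleGraph_connected, Pi.single_eq_same, Pi.single_eq_of_ne huv.symm, sub_zero]

variable {r : ℕ}

theorem degree_cycleGraph_succ (hr : 1 ≤ r) (x : Fin (r + 1)) :
    (cycleGraph (r + 1)).degree x = if r = 1 then 1 else 2 := by
  obtain rfl | ⟨n, rfl⟩ : r = 1 ∨ ∃ n, r = n + 2 := by
    rcases r with _ | _ | n <;> simp_all
  · rw [← card_neighborFinset_eq_degree, cycleGraph_two_neighborFinset, card_singleton, if_pos rfl]
  · rw [cycleGraph_degree_three_le]
    simp

theorem sum_effRes_cycleGraph_succ (hr : 1 ≤ r) (u : Fin (r + 1)) :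
    ∑ v, effRes (cycleGraph (r + 1)) u v = if r = 1 then 1 else (r : ℝ) * (r + 2) / 6 := by
  obtain rfl | ⟨n, rfl⟩ : r = 1 ∨ ∃ n, r = n + 2 := by
    rcases r with _ | _ | n <;> simp_all
  · rw [← add_sum_erase _ _ (mem_univ u), effRes_self,
      sum_congr rfl fun v hv => effRes_cycleGraph_two (ne_of_mem_erase hv).symm]
    simp
  · simp only [effRes_cycleGraph]
    refine (Fintype.sum_equiv (Equiv.subRight u) _ arcRes fun _ => rfl).trans ?_
    rw [sum_arcRes]
    simp

theorem two_thirds_le_effRes_cycleGraph_succ (hr : 1 ≤ r) {u v : Fin (r + 1)} (huv : u ≠ v) :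
    2 / 3 ≤ effRes (cycleGraph (r + 1)) u v := by
  obtain rfl | ⟨n, rfl⟩ : r = 1 ∨ ∃ n, r = n + 2 := by
    rcases r with _ | _ | n <;> simp_all
  · rw [effRes_cycleGraph_two huv]
    norm_num
  · rw [effRes_cycleGraph]
    exact two_thirds_le_arcRes (sub_ne_zero.mpr huv.symm)

end CycleGraph

section BlockDecomp

variable {V ι : Type*} {G : SimpleGraph V}

/-- A decomposition of `G` into blocks, indexed by `ι`: every edge lies in a block, and each block
is a retract of `G` under a map `proj B` which collapses every other block to a point. For the
blocks of a connected graph, `proj B v` is the vertex at which every path from `v` enters `B`. -/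
structure BlockDecomp (G : SimpleGraph V) (ι : Type*) where
  verts : ι → Finset V
  proj : ∀ B, V → (verts B : Set V)
  proj_coe : ∀ B (x : (verts B : Set V)), proj B x = x
  proj_eq_of_mem : ∀ {B B' x y}, B ≠ B' → x ∈ verts B' → y ∈ verts B' → proj B x = proj B y
  exists_mem_of_adj : ∀ {x y}, G.Adj x y → ∃ B, x ∈ verts B ∧ y ∈ verts B

namespace BlockDecomp

/-- The block `B` as a graph of its own. -/
abbrev block (D : BlockDecomp G ι) (B : ι) : SimpleGraph (D.verts B : Set V) :=
  G.induce (D.verts B : Set V)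

variable (D : BlockDecomp G ι) {B B' : ι} {u v w x y : V}

theorem proj_of_mem (hx : x ∈ D.verts B) : D.proj B x = ⟨x, hx⟩ :=
  D.proj_coe B ⟨x, hx⟩

theorem proj_eq_iff_mem : (D.proj B x : V) = x ↔ x ∈ D.verts B :=
  ⟨fun h => h ▸ (D.proj B x).2, fun h => by rw [D.proj_of_mem h]⟩

theorem eq_of_mem_of_mem (hx : x ∈ D.verts B) (hy : y ∈ D.verts B) (hx' : x ∈ D.verts B')
    (hy' : y ∈ D.verts B') (hxy : x ≠ y) : B = B' := by
  by_contra hBB'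
  have := D.proj_eq_of_mem hBB' hx' hy'
  rw [D.proj_of_mem hx, D.proj_of_mem hy] at this
  exact hxy (congrArg Subtype.val this)

theorem proj_eq_of_adj (huv : G.Adj u v) (hB : ¬ (u ∈ D.verts B ∧ v ∈ D.verts B)) :
    D.proj B u = D.proj B v := by
  obtain ⟨B', hu, hv⟩ := D.exists_mem_of_adj huv
  exact D.proj_eq_of_mem (by rintro rfl; exact hB ⟨hu, hv⟩) hu hv

theorem block_connected (hG : G.Connected) (B : ι) : (D.block B).Connected := by
  have hstep (u v : V) (huv : G.Adj u v) :
      (D.block B).Reachable (D.proj B u) (D.proj B v) := by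
    by_cases hB : u ∈ D.verts B ∧ v ∈ D.verts B
    · rw [D.proj_of_mem hB.1, D.proj_of_mem hB.2]
      exact SimpleGraph.Adj.reachable huv
    · rw [D.proj_eq_of_adj huv hB]
  have hreach (u v : V) : (D.block B).Reachable (D.proj B u) (D.proj B v) := by
    obtain ⟨p⟩ := hG.preconnected u v
    induction p with
    | nil => rfl
    | cons huv _ ih => exact (hstep _ _ huv).trans ih
  have := hG.nonempty.map (D.proj B)
  refine ⟨fun x y => ?_⟩
  simpa only [D.proj_coe] using hreach x y

theorem exists_mem_notMem (hB : 1 < #(D.verts B)) (hBB' : B ≠ B') :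
    ∃ y ∈ D.verts B, y ∉ D.verts B' := by
  obtain ⟨x, hx, y, hy, hxy⟩ := one_lt_card.mp hB
  by_contra! hsub
  exact hBB' (D.eq_of_mem_of_mem hx hy (hsub x hx) (hsub y hy) hxy)

theorem forall_mem_verts_of_proj_eq {z : V} {B₀ : ι} (hG : G.Connected)
    (hB : ∀ B, 1 < #(D.verts B)) (hz₀ : z ∈ D.verts B₀)
    (hproj : ∀ B w, z ∈ D.verts B → w ∉ D.verts B → (D.proj B w : V) = z) (B : ι) :
    z ∈ D.verts B := by
  have hspread {B B' x} (hzB : z ∈ D.verts B) (hxB : x ∈ D.verts B) (hxB' : x ∈ D.verts B') :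
      z ∈ D.verts B' := by
    obtain rfl | hBB' := eq_or_ne B B'
    · exact hzB
    · obtain ⟨y, hy, hyB⟩ := D.exists_mem_notMem (hB B') hBB'.symm
      have := hproj B y hzB hyB
      rw [D.proj_eq_of_mem hBB' hy hxB', D.proj_of_mem hxB] at this
      exact this ▸ hxB'
  have hcover (x : V) : ∃ B, z ∈ D.verts B ∧ x ∈ D.verts B := by
    obtain ⟨p⟩ := hG.preconnected x z
    induction p with
    | nil => exact ⟨B₀, hz₀, hz₀⟩
    | cons huv _ ih =>
      obtain ⟨B', hzB', hvB'⟩ := ih hz₀ hproj hspread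
      obtain ⟨B, huB, hvB⟩ := D.exists_mem_of_adj huv
      exact ⟨B, hspread hzB' hvB' hvB, huB⟩
  obtain ⟨x, hx⟩ := card_pos.mp (one_pos.trans (hB B))
  obtain ⟨B', hzB', hxB'⟩ := hcover x
  exact hspread hzB' hxB' hx

section Telescope

variable [Fintype ι]

theorem sum_proj_sub_proj {A : Type*} [AddCommGroup A] (hG : G.Connected) (f : V → A) (u v : V) :
    ∑ B, (f (D.proj B u) - f (D.proj B v)) = f u - f v := by
  classical
  have hstep (u v : V) (huv : G.Adj u v) :
      ∑ B, (f (D.proj B u) - f (D.proj B v)) = f u - f v := by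
    obtain ⟨B, hu, hv⟩ := D.exists_mem_of_adj huv
    rw [sum_eq_single_of_mem B (mem_univ B), D.proj_of_mem hu, D.proj_of_mem hv]
    intro B' _ hB'
    rw [D.proj_eq_of_mem hB' hu hv, sub_self]
  obtain ⟨p⟩ := hG.preconnected u v
  induction p with
  | nil => simp
  | @cons u w v huw _ ih =>
    rw [← sub_add_sub_cancel (f u) (f w), ← hstep u w huw, ← ih, ← sum_add_distrib]
    simp

theorem sum_card_verts_sub_one [Fintype V] (hG : G.Connected) :
    ∑ B, ((#(D.verts B) : ℝ) - 1) = Fintype.card V - 1 := by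
  classical
  obtain ⟨u⟩ := hG.nonempty
  have hcount (z : V) : ∑ B, ((if z ∈ D.verts B then (1 : ℝ) else 0)
      - if z = D.proj B u then 1 else 0) = 1 - if z = u then 1 else 0 := by
    have := D.sum_proj_sub_proj hG (fun w => if z = w then (1 : ℝ) else 0) z u
    simpa only [eq_comm (b := (D.proj _ z : V)), D.proj_eq_iff_mem, if_true] using this
  have := sum_congr rfl fun z (_ : z ∈ univ) => hcount z
  rw [sum_comm] at this
  simpa using this

end Telescope

section Resistance

section

variable [Fintype V] [DecidableRel G.Adj]

theorem sum_neighborFinset_proj_of_mem (hw : w ∈ D.verts B) (ψ : ↥(D.verts B : Set V) → ℝ) :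
    ∑ x ∈ G.neighborFinset w, (ψ (D.proj B w) - ψ (D.proj B x))
      = ∑ x ∈ (D.block B).neighborFinset ⟨w, hw⟩, (ψ ⟨w, hw⟩ - ψ x) := by
  classical
  rw [D.proj_of_mem hw]
  symm
  refine sum_of_injOn Subtype.val Subtype.val_injective.injOn ?_ ?_ ?_
  · simp [Set.MapsTo]
  · intro x hx hx'
    rw [← D.proj_of_mem hw, D.proj_eq_of_adj ((G.mem_neighborFinset w x).mp hx), sub_self]
    exact fun h => hx' ⟨⟨x, h.2⟩, by simpa using hx, rfl⟩
  · simp [D.proj_coe]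

theorem sum_neighborFinset_proj_of_notMem (hw : w ∉ D.verts B) (ψ : ↥(D.verts B : Set V) → ℝ) :
    ∑ x ∈ G.neighborFinset w, (ψ (D.proj B w) - ψ (D.proj B x)) = 0 := by
  refine sum_eq_zero fun x hx => ?_
  rw [D.proj_eq_of_adj ((G.mem_neighborFinset w x).mp hx) fun h => hw h.1, sub_self]

end

theorem isUnitPotential_sum_proj [Finite V] [Fintype ι] (hG : G.Connected)
    {ψ : ∀ B, ↥(D.verts B : Set V) → ℝ}
    (hψ : ∀ B, IsUnitPotential (D.block B) (ψ B) (D.proj B u) (D.proj B v)) :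
    IsUnitPotential G (fun w => ∑ B, ψ B (D.proj B w)) u v := by
  classical
  cases nonempty_fintype V
  rw [isUnitPotential_iff_sum]
  intro w
  have hblock (B : ι) : ∑ x ∈ G.neighborFinset w, (ψ B (D.proj B w) - ψ B (D.proj B x))
      = (if w = D.proj B u then 1 else 0) - if w = D.proj B v then 1 else 0 := by
    by_cases hw : w ∈ D.verts B
    · rw [D.sum_neighborFinset_proj_of_mem hw, isUnitPotential_iff_sum.mp (hψ B) ⟨w, hw⟩]
      simp only [Subtype.ext_iff]
    · have hne (x : V) : w ≠ D.proj B x := fun h => hw (h ▸ (D.proj B x).2)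
      rw [D.sum_neighborFinset_proj_of_notMem hw, if_neg (hne u), if_neg (hne v), sub_self]
  simp only [← sum_sub_distrib]
  rw [sum_comm, sum_congr rfl fun B _ => hblock B]
  exact D.sum_proj_sub_proj hG (fun z => if w = z then (1 : ℝ) else 0) u v

theorem effRes_eq_sum_block [Finite V] [Fintype ι] (hG : G.Connected) (u v : V) :
    effRes G u v = ∑ B, effRes (D.block B) (D.proj B u) (D.proj B v) := by
  classical
  cases nonempty_fintype V
  choose ψ hψ using fun B =>
    exists_isUnitPotential (D.block_connected hG B) (D.proj B u) (D.proj B v)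
  rw [(D.isUnitPotential_sum_proj hG hψ).effRes_eq hG, ← sum_sub_distrib]
  exact sum_congr rfl fun B _ => ((hψ B).effRes_eq (D.block_connected hG B)).symm

variable [Fintype V] [DecidableEq V]

/-- The total weight `f` of the vertices that project to the vertex `x` of the block `B`. -/
def mass (f : V → ℝ) (B : ι) (x : (D.verts B : Set V)) : ℝ :=
  ∑ w with D.proj B w = x, f w

theorem sum_mass_mul (f : V → ℝ) (B : ι) (h : ↥(D.verts B : Set V) → ℝ) :
    ∑ x, D.mass f B x * h x = ∑ w, f w * h (D.proj B w) := by
  rw [← sum_fiberwise univ (D.proj B) fun w => f w * h (D.proj B w)]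
  refine sum_congr rfl fun x _ => ?_
  rw [mass, sum_mul]
  exact sum_congr rfl fun w hw => by rw [(mem_filter.mp hw).2]

theorem sum_mass (f : V → ℝ) (B : ι) : ∑ x, D.mass f B x = ∑ w, f w :=
  sum_fiberwise _ _ _

theorem sum_mul_effRes_eq_sum_mass [Fintype ι] (hG : G.Connected) (f g : V → ℝ) :
    ∑ u, ∑ v, f u * (g v * effRes G u v)
      = ∑ B, ∑ x, ∑ y, D.mass f B x * (D.mass g B y * effRes (D.block B) x y) := by
  simp only [← mul_sum, D.sum_mass_mul, D.effRes_eq_sum_block hG]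
  rw [sum_comm]
  refine sum_congr rfl fun u _ => ?_
  rw [← mul_sum, sum_comm]
  simp only [mul_sum]

end Resistance

section Branch

variable [Fintype V] [DecidableEq V]

/-- The vertices of `G` hanging off the block `B` at its vertex `x`. -/
def branch (B : ι) (x : (D.verts B : Set V)) : Finset V :=
  {w | D.proj B w = x ∧ w ≠ x}

variable {D} in
theorem mem_branch {x : (D.verts B : Set V)} : w ∈ D.branch B x ↔ D.proj B w = x ∧ w ≠ x := by
  simp [branch]

theorem mem_branch_proj (hw : w ∉ D.verts B) : w ∈ D.branch B (D.proj B w) :=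
  mem_branch.mpr ⟨rfl, fun h => hw (h ▸ (D.proj B w).2)⟩

variable {D} in
theorem notMem_of_mem_branch {x : (D.verts B : Set V)} (hw : w ∈ D.branch B x) :
    w ∉ D.verts B := fun h =>
  (mem_branch.mp hw).2 <| by rw [← (mem_branch.mp hw).1, D.proj_of_mem h]

theorem mass_eq_add_sum_branch (f : V → ℝ) (B : ι) (x : (D.verts B : Set V)) :
    D.mass f B x = f x + ∑ w ∈ D.branch B x, f w := by
  have hx : (x : V) ∈ ({w | D.proj B w = x} : Finset V) := by simp [D.proj_coe]
  rw [mass, ← add_sum_erase _ _ hx]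
  congr 2
  ext w
  simp [mem_branch, and_comm]

theorem exists_forall_mem_verts (hG : G.Connected) (hB : ∀ B, 1 < #(D.verts B))
    (hbranch : ∀ B x y, (D.branch B x).Nonempty → (D.branch B y).Nonempty → x = y) :
    ∃ z, ∀ B, z ∈ D.verts B := by
  by_cases hall : ∀ B w, w ∈ D.verts B
  · exact hG.nonempty.elim fun z => ⟨z, fun B => hall B z⟩
  push Not at hall
  obtain ⟨B₀, w₀, hw₀⟩ := hall
  have hproj {B w w'} (hw : w ∉ D.verts B) (hw' : w' ∉ D.verts B) :
      D.proj B w = D.proj B w' :=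
    hbranch B _ _ ⟨w, D.mem_branch_proj hw⟩ ⟨w', D.mem_branch_proj hw'⟩
  have hz₀ := (D.proj B₀ w₀).2
  refine ⟨D.proj B₀ w₀, D.forall_mem_verts_of_proj_eq hG hB hz₀ fun B w hzB hw => ?_⟩
  obtain rfl | hBB₀ := eq_or_ne B B₀
  · rw [hproj hw hw₀]
  · obtain ⟨y, hy, hyB⟩ := D.exists_mem_notMem (hB B₀) hBB₀.symm
    rw [hproj hw hyB, D.proj_eq_of_mem hBB₀ hy hz₀, D.proj_of_mem hzB]

theorem coe_eq_of_branch_nonempty {z : V} (hG : G.Connected) (hz : ∀ B, z ∈ D.verts B)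
    {x : (D.verts B : Set V)} (hx : (D.branch B x).Nonempty) : (x : V) = z := by
  obtain ⟨w, hw⟩ := hx
  have hnt : Nontrivial V := ⟨w, x, (mem_branch.mp hw).2⟩
  obtain ⟨v, hwv⟩ := hG.preconnected.exists_adj_of_nontrivial w
  obtain ⟨B', hwB', -⟩ := D.exists_mem_of_adj hwv
  have hBB' : B ≠ B' := by
    rintro rfl
    exact notMem_of_mem_branch hw hwB'
  rw [← (mem_branch.mp hw).1, D.proj_eq_of_mem hBB' hwB' (hz B'), D.proj_of_mem (hz B)]

theorem mem_branch_of_adj {x : (D.verts B : Set V)} (hxw : G.Adj x w) (hw : w ∉ D.verts B) :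
    w ∈ D.branch B x := by
  refine mem_branch.mpr ⟨?_, hxw.ne'⟩
  rw [← D.proj_eq_of_adj hxw fun h => hw h.2, D.proj_coe]

theorem sum_card_branch_eq (B : ι) :
    ∑ x, (#(D.branch B x) : ℝ) = Fintype.card V - #(D.verts B) := by
  have := D.sum_mass (fun _ => 1) B
  simp only [D.mass_eq_add_sum_branch, sum_add_distrib, sum_const, card_univ, nsmul_eq_mul,
    mul_one] at this
  rw [← this]
  simp

variable [DecidableRel G.Adj]

theorem degree_block (x : (D.verts B : Set V)) :
    (D.block B).degree x = #(G.neighborFinset x ∩ D.verts B) := by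
  rw [← SimpleGraph.card_neighborFinset_eq_degree, ← card_map (.subtype (· ∈ (D.verts B : Set V)))]
  congr 1
  ext
  simp

theorem degree_eq_degree_block_add (x : (D.verts B : Set V)) :
    G.degree x = (D.block B).degree x + #(G.neighborFinset x \ D.verts B) := by
  rw [← SimpleGraph.card_neighborFinset_eq_degree, degree_block, card_inter_add_card_sdiff]

/-- The number of edge ends in the branch of the block `B` at `x` that do not lie on edges of `B`
itself. -/
def branchDegree (B : ι) (x : (D.verts B : Set V)) : ℕ :=
  #(G.neighborFinset x \ D.verts B) + ∑ w ∈ D.branch B x, G.degree w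

theorem mass_degree_eq (B : ι) (x : (D.verts B : Set V)) :
    D.mass (fun w => (G.degree w : ℝ)) B x = (D.block B).degree x + D.branchDegree B x := by
  rw [D.mass_eq_add_sum_branch, D.degree_eq_degree_block_add, branchDegree]
  push_cast
  ring

theorem branchDegree_eq_zero {x : (D.verts B : Set V)} (hx : D.branch B x = ∅) :
    D.branchDegree B x = 0 := by
  have hsub : G.neighborFinset x \ D.verts B = ∅ := by
    refine eq_empty_of_forall_notMem fun w hw => ?_
    obtain ⟨hxw, hwB⟩ := mem_sdiff.mp hw
    exact notMem_empty w (hx ▸ D.mem_branch_of_adj ((G.mem_neighborFinset _ _).mp hxw) hwB)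
  rw [branchDegree, hsub, hx, card_empty, sum_empty, add_zero]

theorem two_le_branchDegree (hG : G.Connected) {x : (D.verts B : Set V)}
    (hx : (D.branch B x).Nonempty) : 2 ≤ D.branchDegree B x := by
  obtain ⟨w, hw⟩ := hx
  have hnt : Nontrivial V := ⟨w, x, (mem_branch.mp hw).2⟩
  have hpos (v : V) : 0 < G.degree v := hG.preconnected.degree_pos_of_nontrivial v
  obtain ⟨v, hwv⟩ := hG.preconnected.exists_adj_of_nontrivial w
  have hle := single_le_sum (f := fun v => G.degree v) (fun _ _ => Nat.zero_le _) hw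
  rw [branchDegree]
  obtain rfl | hvx := eq_or_ne v x
  · have : 0 < #(G.neighborFinset x \ D.verts B) :=
      card_pos.mpr ⟨w, mem_sdiff.mpr ⟨by simpa using hwv.symm, notMem_of_mem_branch hw⟩⟩
    have := hpos w
    omega
  · have hv : v ∈ D.branch B x := by
      refine mem_branch.mpr ⟨?_, hvx⟩
      rw [← D.proj_eq_of_adj hwv fun h => notMem_of_mem_branch hw h.1, (mem_branch.mp hw).1]
    have hpair := sum_le_sum_of_subset (f := fun v => G.degree v)
      (insert_subset hw (singleton_subset_iff.mpr hv))
    rw [sum_pair hwv.ne] at hpair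
    have := hpos w
    have := hpos v
    omega

theorem sum_branchDegree_eq (B : ι) : ∑ x, (D.branchDegree B x : ℝ)
    = ∑ w, (G.degree w : ℝ) - ∑ x, ((D.block B).degree x : ℝ) := by
  rw [← D.sum_mass _ B]
  simp only [D.mass_degree_eq, sum_add_distrib, add_sub_cancel_left]

end Branch

theorem sum_degree_eq_sum_block [Fintype V] [DecidableRel G.Adj] [Fintype ι] :
    ∑ w, G.degree w = ∑ B, ∑ x, (D.block B).degree x := by
  classical
  have hvertex (w : V) : G.degree w
      = ∑ B, if w ∈ D.verts B then #(G.neighborFinset w ∩ D.verts B) else 0 := by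
    have hedge (v : V) (hv : v ∈ G.neighborFinset w) :
        #{B | w ∈ D.verts B ∧ v ∈ D.verts B} = 1 := by
      have hwv := (G.mem_neighborFinset w v).mp hv
      obtain ⟨B, hB⟩ := D.exists_mem_of_adj hwv
      refine card_eq_one.mpr ⟨B, eq_singleton_iff_unique_mem.mpr ⟨by simpa using hB, ?_⟩⟩
      intro B' hB'
      obtain ⟨hw', hv'⟩ := (mem_filter.mp hB').2
      exact D.eq_of_mem_of_mem hw' hv' hB.1 hB.2 hwv.ne
    rw [← SimpleGraph.card_neighborFinset_eq_degree, card_eq_sum_ones,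
      ← sum_congr rfl hedge]
    simp only [card_eq_sum_ones, sum_filter]
    rw [sum_comm]
    refine sum_congr rfl fun B _ => ?_
    split_ifs with hw <;> simp [hw]
  simp only [hvertex, D.degree_block]
  rw [sum_comm]
  refine sum_congr rfl fun B _ => ?_
  rw [← sum_filter, filter_univ_mem, ← sum_coe_sort]
  rfl

end BlockDecomp

end BlockDecomp

theorem sum_add_two_mul_sum_sub_four_le {α : Type*} [Fintype α] {f g : α → ℝ}
    (hfg : ∀ x, f x = 0 ∧ g x = 0 ∨ 2 ≤ f x ∧ 1 ≤ g x) {a b : α} (hab : a ≠ b)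
    (ha : f a ≠ 0) (hb : f b ≠ 0) :
    ∑ x, f x + 2 * ∑ x, g x - 4 ≤ ∑ x, f x * (∑ y, g y - g x) := by
  classical
  have hg (x : α) : 0 ≤ g x := by obtain h | h := hfg x <;> linarith
  have hpair {x y : α} (hxy : x ≠ y) : g x + g y ≤ ∑ z, g z := by
    rw [← sum_pair hxy]
    exact sum_le_sum_of_subset_of_nonneg (subset_univ _) fun z _ _ => hg z
  have hg_one {x : α} (hx : f x ≠ 0) : 1 ≤ g x := by
    obtain h | h := hfg x
    exacts [absurd h.1 hx, h.2]
  have hrest (x : α) : 1 ≤ ∑ y, g y - g x := by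
    obtain rfl | hxa := eq_or_ne x a
    · linarith [hpair hab, hg_one hb]
    · linarith [hpair hxa, hg_one ha]
  have hterm (x : α) : (if f x = 0 then 0 else 2 * (∑ y, g y - g x - 1))
      ≤ f x * (∑ y, g y - g x) - f x := by
    obtain h | h := hfg x
    · simp [h.1]
    · have hx : f x ≠ 0 := by linarith
      rw [if_neg hx]
      nlinarith [hrest x]
  have htwo : 2 * (∑ y, g y - g a - 1) + 2 * (∑ y, g y - g b - 1)
      ≤ ∑ x, if f x = 0 then 0 else 2 * (∑ y, g y - g x - 1) := by
    have := sum_le_sum_of_subset_of_nonneg (subset_univ {a, b})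
      fun x _ _ => show 0 ≤ if f x = 0 then 0 else 2 * (∑ y, g y - g x - 1) by
        split_ifs with hx
        exacts [le_rfl, by linarith [hrest x]]
    rwa [sum_pair hab, if_neg ha, if_neg hb] at this
  have hsum := sum_le_sum fun x (_ : x ∈ univ) => hterm x
  rw [sum_sub_distrib] at hsum
  linarith [hpair hab]

namespace BlockDecomp

variable {V ι : Type*} {G : SimpleGraph V} [Fintype V] [DecidableEq V] [DecidableRel G.Adj]
variable (D : BlockDecomp G ι) {B : ι}

/-- The contribution to `degRes G` of the resistance of the block `B` between the vertices outside
`B`. -/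
noncomputable def interaction (B : ι) : ℝ :=
  ∑ x, ∑ y, (D.branchDegree B x : ℝ) * (#(D.branch B y) * effRes (D.block B) x y)

theorem interaction_eq_zero
    (hB : ∀ x y, (D.branch B x).Nonempty → (D.branch B y).Nonempty → x = y) :
    D.interaction B = 0 := by
  refine sum_eq_zero fun x _ => sum_eq_zero fun y _ => ?_
  obtain hx | hx := (D.branch B x).eq_empty_or_nonempty
  · rw [D.branchDegree_eq_zero hx, Nat.cast_zero, zero_mul]
  · obtain hy | hy := (D.branch B y).eq_empty_or_nonempty
    · rw [hy, card_empty, Nat.cast_zero, zero_mul, mul_zero]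
    · rw [hB x y hx hy, effRes_self, mul_zero, mul_zero]

theorem interaction_nonneg (hB : ∀ x y, 0 ≤ effRes (D.block B) x y) : 0 ≤ D.interaction B :=
  sum_nonneg fun x _ => sum_nonneg fun y _ =>
    mul_nonneg (Nat.cast_nonneg _) (mul_nonneg (Nat.cast_nonneg _) (hB x y))

theorem le_interaction (hG : G.Connected) {a : ℝ} (ha : 0 ≤ a)
    (hB : ∀ x y, x ≠ y → a ≤ effRes (D.block B) x y) {x y : (D.verts B : Set V)} (hxy : x ≠ y)
    (hx : (D.branch B x).Nonempty) (hy : (D.branch B y).Nonempty) :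
    a * (∑ x, (D.branchDegree B x : ℝ) + 2 * ∑ x, (#(D.branch B x) : ℝ) - 4)
      ≤ D.interaction B := by
  have hbranch (x) : (D.branchDegree B x : ℝ) = 0 ∧ (#(D.branch B x) : ℝ) = 0 ∨
      2 ≤ (D.branchDegree B x : ℝ) ∧ 1 ≤ (#(D.branch B x) : ℝ) := by
    obtain hx | hx := (D.branch B x).eq_empty_or_nonempty
    · simp [hx, D.branchDegree_eq_zero hx]
    · exact .inr ⟨mod_cast D.two_le_branchDegree hG hx, mod_cast card_pos.mpr hx⟩
  have hne {x} (hx : (D.branch B x).Nonempty) : (D.branchDegree B x : ℝ) ≠ 0 := by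
    have := D.two_le_branchDegree hG hx
    exact Nat.cast_ne_zero.mpr (by omega)
  refine (mul_le_mul_of_nonneg_left
    (sum_add_two_mul_sum_sub_four_le hbranch hxy (hne hx) (hne hy)) ha).trans ?_
  rw [interaction, mul_sum]
  refine sum_le_sum fun x _ => ?_
  have hrest : ∑ y, (#(D.branch B y) : ℝ) * a - #(D.branch B x) * a
      ≤ ∑ y, (#(D.branch B y) : ℝ) * effRes (D.block B) x y := by
    rw [← sum_erase_eq_sub (mem_univ x), ← sum_erase (a := x) univ (by simp [effRes_self])]
    exact sum_le_sum fun y hy =>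
      mul_le_mul_of_nonneg_left (hB x y (ne_of_mem_erase hy).symm) (Nat.cast_nonneg _)
  rw [← mul_sum]
  refine le_trans (le_of_eq ?_) (mul_le_mul_of_nonneg_left hrest (Nat.cast_nonneg _))
  rw [← sum_mul]
  ring

end BlockDecomp

/-- A decomposition of `G` into single edges and cycles. The block `B` is a cycle of length
`rank B + 1`, except that `rank B = 1` encodes a single edge: `cycleGraph 2` is an edge, and
`rank B` is then always one less than the number of vertices of `B`. -/
structure CactusDecomp {V : Type*} (G : SimpleGraph V) (ι : Type*) extends BlockDecomp G ι where
  rank : ι → ℕ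
  rank_pos : ∀ B, 1 ≤ rank B
  iso : ∀ B, Nonempty (SimpleGraph.cycleGraph (rank B + 1) ≃g G.induce (verts B : Set V))

/-- The amount by which the contribution of a cycle of length `r + 1` to the degree resistance
distance of a bouquet with `n` vertices and `t` cycles exceeds that of `r` pendent edges. -/
noncomputable def cycleExcess (n t r : ℝ) : ℝ :=
  r * (r + 2) / 3 * (2 * n + t - 2 - r) - (3 * n + 2 * t - 4) * r

namespace CactusDecomp

variable {V ι : Type*} {G : SimpleGraph V} (D : CactusDecomp G ι)

/-- The blocks that are cycles. -/
def cycles [Fintype ι] : Finset ι := {B | D.rank B ≠ 1}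

theorem sum_ite_rank_eq_one [Fintype ι] (f : ι → ℝ) :
    ∑ B, (if D.rank B = 1 then 0 else f B) = ∑ B ∈ D.cycles, f B := by
  simp only [cycles, sum_filter, ite_not]

theorem card_verts (B : ι) : #(D.verts B) = D.rank B + 1 := by
  obtain ⟨e⟩ := D.iso B
  simpa using (Fintype.card_congr e.toEquiv).symm

theorem one_lt_card_verts (B : ι) : 1 < #(D.verts B) := by
  have := D.rank_pos B
  rw [D.card_verts]
  omega

theorem two_thirds_le_effRes_block (B : ι) {x y : (D.verts B : Set V)} (hxy : x ≠ y) :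
    2 / 3 ≤ effRes (D.block B) x y := by
  obtain ⟨e⟩ := D.iso B
  obtain ⟨x, rfl⟩ := e.surjective x
  obtain ⟨y, rfl⟩ := e.surjective y
  rw [effRes_iso e SimpleGraph.cycleGraph_connected]
  exact two_thirds_le_effRes_cycleGraph_succ (D.rank_pos B) fun h => hxy (congrArg e h)

theorem sum_effRes_block (B : ι) (x : (D.verts B : Set V)) : ∑ y, effRes (D.block B) x y
    = if D.rank B = 1 then 1 else (D.rank B : ℝ) * (D.rank B + 2) / 6 := by
  obtain ⟨e⟩ := D.iso B
  obtain ⟨x, rfl⟩ := e.surjective x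
  rw [← e.toEquiv.sum_comp, ← sum_effRes_cycleGraph_succ (D.rank_pos B) x]
  exact sum_congr rfl fun y _ => effRes_iso e SimpleGraph.cycleGraph_connected x y

theorem sum_rank [Fintype V] [Fintype ι] (hG : G.Connected) :
    ∑ B, (D.rank B : ℝ) = Fintype.card V - 1 := by
  rw [← D.sum_card_verts_sub_one hG]
  exact sum_congr rfl fun B _ => by rw [D.card_verts]; push_cast; ring

theorem interaction_nonneg [Fintype V] [DecidableEq V] [DecidableRel G.Adj] (B : ι) :
    0 ≤ D.interaction B := by
  refine D.toBlockDecomp.interaction_nonneg fun x y => ?_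
  obtain rfl | hxy := eq_or_ne x y
  · rw [effRes_self]
  · linarith [D.two_thirds_le_effRes_block B hxy]

section

variable [DecidableRel G.Adj]

theorem degree_block_eq (B : ι) (x : (D.verts B : Set V)) :
    (D.block B).degree x = if D.rank B = 1 then 1 else 2 := by
  obtain ⟨e⟩ := D.iso B
  obtain ⟨x, rfl⟩ := e.surjective x
  rw [e.degree_eq, degree_cycleGraph_succ (D.rank_pos B)]

theorem sum_degree_block (B : ι) : ∑ x, ((D.block B).degree x : ℝ)
    = 2 * D.rank B + if D.rank B = 1 then 0 else 2 := by
  simp only [D.degree_block_eq, sum_const, card_univ]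
  simp only [coe_sort_coe, Fintype.card_coe, D.card_verts, nsmul_eq_mul]
  split_ifs with hB
  · rw [hB]; norm_num
  · push_cast; ring

variable [Fintype V] [Fintype ι]

theorem sum_degree (hG : G.Connected) :
    ∑ w, (G.degree w : ℝ) = 2 * (Fintype.card V - 1) + 2 * #D.cycles := by
  have hblock : ∑ w, (G.degree w : ℝ) = ∑ B, ∑ x, ((D.block B).degree x : ℝ) :=
    mod_cast D.sum_degree_eq_sum_block
  simp only [hblock, D.sum_degree_block, sum_add_distrib, ← mul_sum, D.sum_rank hG]
  rw [D.sum_ite_rank_eq_one, sum_const, nsmul_eq_mul, mul_comm (2 : ℝ) #D.cycles]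

variable [DecidableEq V]

theorem sum_mass_mul_effRes_block (hG : G.Connected) (B : ι) :
    ∑ x, ∑ y, D.mass (fun w => (G.degree w : ℝ)) B x *
        (D.mass (fun _ => 1) B y * effRes (D.block B) x y)
      = (3 * Fintype.card V + 2 * #D.cycles - 4) * D.rank B
        + (if D.rank B = 1 then 0 else cycleExcess (Fintype.card V) #D.cycles (D.rank B))
        + D.interaction B := by
  have hmass_one (y) : D.mass (fun _ => 1) B y = 1 + #(D.branch B y) := by
    rw [D.mass_eq_add_sum_branch, sum_const, nsmul_eq_mul, mul_one]
  have hcol (y) : ∑ x, effRes (D.block B) x y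
      = if D.rank B = 1 then 1 else (D.rank B : ℝ) * (D.rank B + 2) / 6 := by
    simp only [effRes_comm (D.block_connected hG B) _ y, D.sum_effRes_block]
  have hdegree : ∑ x, ∑ y, ((D.block B).degree x : ℝ) * (D.mass (fun _ => 1) B y *
      effRes (D.block B) x y) = (if D.rank B = 1 then 1 else 2) * (Fintype.card V *
        if D.rank B = 1 then 1 else (D.rank B : ℝ) * (D.rank B + 2) / 6) := by
    simp only [D.degree_block_eq, ← mul_sum]
    rw [sum_comm]
    simp only [← mul_sum, hcol, ← sum_mul, D.sum_mass, sum_const, card_univ, nsmul_eq_mul,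
      mul_one, Nat.cast_ite, Nat.cast_one, Nat.cast_ofNat]
  have hbranch : ∑ x, ∑ y, (D.branchDegree B x : ℝ) * (D.mass (fun _ => 1) B y *
      effRes (D.block B) x y) = (∑ x, (D.branchDegree B x : ℝ)) *
        (if D.rank B = 1 then 1 else (D.rank B : ℝ) * (D.rank B + 2) / 6) + D.interaction B := by
    simp only [hmass_one, add_mul, one_mul, mul_add, sum_add_distrib, ← mul_sum,
      D.sum_effRes_block, ← sum_mul]
    simp only [BlockDecomp.interaction, mul_sum]
  simp only [D.mass_degree_eq, add_mul, sum_add_distrib, hdegree, hbranch,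
    D.sum_branchDegree_eq, D.sum_degree hG, D.sum_degree_block]
  rw [cycleExcess]
  split_ifs with hB
  · rw [hB]; push_cast; ring
  · ring

theorem degRes_eq (hG : G.Connected) :
    degRes G = (3 * Fintype.card V + 2 * #D.cycles - 4) * (Fintype.card V - 1)
      + ∑ B ∈ D.cycles, cycleExcess (Fintype.card V) #D.cycles (D.rank B)
      + ∑ B, D.interaction B := by
  have hsplit := D.sum_mul_effRes_eq_sum_mass hG (fun w => (G.degree w : ℝ)) fun _ => 1
  simp only [one_mul, D.sum_mass_mul_effRes_block hG, sum_add_distrib] at hsplit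
  rw [degRes_eq_sum_degree_mul hG, hsplit, ← mul_sum, D.sum_rank hG, D.sum_ite_rank_eq_one]

end

end CactusDecomp

section CycleExcess

variable {n t : ℝ}

theorem cycleExcess_two_lt_three (hn : 7 ≤ n) (ht : 1 ≤ t) :
    cycleExcess n t 2 < cycleExcess n t 3 := by
  unfold cycleExcess
  linarith

theorem cycleExcess_three_lt (hn : 7 ≤ n) (ht : 1 ≤ t) {r : ℕ} (hr : 4 ≤ r) (hrn : r + 1 ≤ n) :
    cycleExcess n t 3 < cycleExcess n t r := by
  have hfactor : 3 * (cycleExcess n t r - cycleExcess n t 3)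
      = (r - 3) * (n * (2 * r + 1) + t * (r - 1) - r ^ 2 - 7 * r - 13) := by
    unfold cycleExcess
    ring
  have hr' : (4 : ℝ) ≤ r := mod_cast hr
  have hpos : 0 < n * (2 * r + 1) + t * (r - 1) - r ^ 2 - 7 * r - 13 := by
    obtain rfl | rfl | hr6 : r = 4 ∨ r = 5 ∨ 6 ≤ r := by omega
    · push_cast; linarith
    · push_cast; linarith
    · have hr6' : (6 : ℝ) ≤ r := mod_cast hr6
      nlinarith
  have := mul_pos (sub_pos.mpr (show (3 : ℝ) < r by linarith)) hpos
  linarith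

theorem cycleExcess_two_le (hn : 7 ≤ n) (ht : 1 ≤ t) {r : ℕ} (hr : 2 ≤ r) (hrn : r + 1 ≤ n) :
    cycleExcess n t 2 ≤ cycleExcess n t r := by
  have htwo := cycleExcess_two_lt_three hn ht
  obtain rfl | rfl | hr4 : r = 2 ∨ r = 3 ∨ 4 ≤ r := by omega
  · exact le_rfl
  · exact htwo.le
  · exact (htwo.trans (cycleExcess_three_lt hn ht hr4 hrn)).le

end CycleExcess

/-- The degree resistance distance of the graph on `n` vertices formed by one quadrilateral,
`t - 1` triangles and pendent edges, all sharing one vertex. -/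
noncomputable def quadBouquetDegRes (n t : ℝ) : ℝ :=
  -(4 / 3) * t ^ 2 + ((4 / 3) * n - 13 / 3) * t + 3 * n ^ 2 - (16 / 3) * n - 19 / 3

theorem quadBouquetDegRes_eq (n t : ℝ) : quadBouquetDegRes n t
    = (3 * n + 2 * t - 4) * (n - 1) + ((t - 1) * cycleExcess n t 2 + cycleExcess n t 3) := by
  unfold quadBouquetDegRes cycleExcess
  ring

namespace CactusDecomp

variable {V ι : Type*} {G : SimpleGraph V} (D : CactusDecomp G ι) {B B₀ : ι}

theorem sum_cycleExcess_of_rank_le_three [Fintype ι] (hrank : ∀ B, D.rank B ≤ 3) (n t : ℝ) :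
    ∑ B ∈ D.cycles, cycleExcess n t (D.rank B) = #D.cycles * cycleExcess n t 2
      + #{B | D.rank B = 3} * (cycleExcess n t 3 - cycleExcess n t 2) := by
  have hterm (B) (hB : B ∈ D.cycles) : cycleExcess n t (D.rank B) = cycleExcess n t 2
      + if D.rank B = 3 then cycleExcess n t 3 - cycleExcess n t 2 else 0 := by
    have := (mem_filter.mp hB).2
    have := D.rank_pos B
    have := hrank B
    obtain h | h : D.rank B = 2 ∨ D.rank B = 3 := by omega
    all_goals simp [h]
  have hthree : D.cycles.filter (D.rank · = 3) = univ.filter (D.rank · = 3) := by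
    rw [cycles, filter_filter]
    exact filter_congr fun B _ => by omega
  rw [sum_congr rfl hterm, sum_add_distrib, ← sum_filter, hthree]
  simp only [sum_const, nsmul_eq_mul]

theorem mem_cycles [Fintype ι] : B ∈ D.cycles ↔ 2 ≤ D.rank B := by
  have := D.rank_pos B
  simp only [cycles, mem_filter_univ]
  omega

theorem rank_add_one_le [Fintype V] (B : ι) : (D.rank B : ℝ) + 1 ≤ Fintype.card V := by
  have := card_le_univ (D.verts B)
  rw [D.card_verts] at this
  exact_mod_cast this

theorem rank_add_three_le [Fintype V] [DecidableEq V] {x y : (D.verts B : Set V)} (hxy : x ≠ y)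
    (hx : (D.branch B x).Nonempty) (hy : (D.branch B y).Nonempty) :
    (D.rank B : ℝ) + 3 ≤ Fintype.card V := by
  have hpair : (#(D.branch B x) : ℝ) + #(D.branch B y) ≤ ∑ z, (#(D.branch B z) : ℝ) := by
    rw [← sum_pair (f := fun z => (#(D.branch B z) : ℝ)) hxy]
    exact sum_le_sum_of_subset_of_nonneg (subset_univ _) fun _ _ _ => Nat.cast_nonneg _
  have hx' : (1 : ℝ) ≤ #(D.branch B x) := mod_cast card_pos.mpr hx
  have hy' : (1 : ℝ) ≤ #(D.branch B y) := mod_cast card_pos.mpr hy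
  rw [D.sum_card_branch_eq, D.card_verts, Nat.cast_add_one] at hpair
  linarith

variable [Fintype V] [Fintype ι]

theorem cycleExcess_two_le_rank (hn : 7 ≤ Fintype.card V) (ht : 1 ≤ #D.cycles)
    (hB : B ∈ D.cycles) :
    cycleExcess (Fintype.card V) #D.cycles 2
      ≤ cycleExcess (Fintype.card V) #D.cycles (D.rank B) :=
  cycleExcess_two_le (mod_cast hn) (mod_cast ht) (D.mem_cycles.mp hB) (D.rank_add_one_le B)

theorem cycleExcess_three_lt_rank (hn : 7 ≤ Fintype.card V) (ht : 1 ≤ #D.cycles)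
    (hB : 4 ≤ D.rank B) :
    cycleExcess (Fintype.card V) #D.cycles 3
      < cycleExcess (Fintype.card V) #D.cycles (D.rank B) :=
  cycleExcess_three_lt (mod_cast hn) (mod_cast ht) hB (D.rank_add_one_le B)

theorem cycleExcess_rank_add_le_sum (hn : 7 ≤ Fintype.card V) (ht : 1 ≤ #D.cycles)
    (hB : B ∈ D.cycles) :
    cycleExcess (Fintype.card V) #D.cycles (D.rank B)
        + (#D.cycles - 1) * cycleExcess (Fintype.card V) #D.cycles 2
      ≤ ∑ B ∈ D.cycles, cycleExcess (Fintype.card V) #D.cycles (D.rank B) := by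
  classical
  have hrest := card_nsmul_le_sum (D.cycles.erase B) _ _ fun B' hB' =>
    D.cycleExcess_two_le_rank hn ht (mem_of_mem_erase hB')
  rw [card_erase_of_mem hB, nsmul_eq_mul, Nat.cast_sub ht, Nat.cast_one] at hrest
  rw [← add_sum_erase _ _ hB]
  linarith

theorem le_sum_cycleExcess (hn : 7 ≤ Fintype.card V) (ht : 1 ≤ #D.cycles)
    (hB : 3 ≤ D.rank B) :
    (#D.cycles - 1) * cycleExcess (Fintype.card V) #D.cycles 2
        + cycleExcess (Fintype.card V) #D.cycles 3
      ≤ ∑ B ∈ D.cycles, cycleExcess (Fintype.card V) #D.cycles (D.rank B) := by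
  have hsum := D.cycleExcess_rank_add_le_sum hn ht (D.mem_cycles.mpr (by omega : 2 ≤ D.rank B))
  obtain h | h := hB.eq_or_lt
  · rw [← h, Nat.cast_ofNat] at hsum
    linarith
  · linarith [D.cycleExcess_three_lt_rank hn ht h]

theorem rank_of_sum_cycleExcess_eq (hn : 7 ≤ Fintype.card V) (ht : 1 ≤ #D.cycles)
    (hB : ∑ B ∈ D.cycles, cycleExcess (Fintype.card V) #D.cycles (D.rank B)
      = (#D.cycles - 1) * cycleExcess (Fintype.card V) #D.cycles 2
        + cycleExcess (Fintype.card V) #D.cycles 3) :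
    (∀ B, D.rank B ≤ 3) ∧ #{B | D.rank B = 3} = 1 := by
  have htwo : cycleExcess (Fintype.card V) #D.cycles 2 < cycleExcess (Fintype.card V) #D.cycles 3 :=
    cycleExcess_two_lt_three (mod_cast hn) (mod_cast ht)
  have hrank (B) : D.rank B ≤ 3 := by
    by_contra! hr
    have := D.cycleExcess_rank_add_le_sum hn ht (D.mem_cycles.mpr (by omega : 2 ≤ D.rank B))
    linarith [D.cycleExcess_three_lt_rank hn ht hr]
  refine ⟨hrank, ?_⟩
  rw [D.sum_cycleExcess_of_rank_le_three hrank] at hB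
  have : ((#{B | D.rank B = 3} : ℝ) - 1) *
      (cycleExcess (Fintype.card V) #D.cycles 3 - cycleExcess (Fintype.card V) #D.cycles 2)
        = 0 := by linarith
  exact_mod_cast sub_eq_zero.mp ((mul_eq_zero.mp this).resolve_right (sub_pos.mpr htwo).ne')

section Interaction

variable [DecidableEq V] {x y : (D.verts B : Set V)}

theorem le_sum_interaction [DecidableRel G.Adj] (hG : G.Connected) (hxy : x ≠ y)
    (hx : (D.branch B x).Nonempty) (hy : (D.branch B y).Nonempty) :
    2 / 3 * (4 * (Fintype.card V - D.rank B - 2) + 2 * #D.cycles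
        - if D.rank B = 1 then 0 else 2)
      ≤ ∑ B, D.interaction B := by
  have hB := D.le_interaction hG (by norm_num) (fun x y => D.two_thirds_le_effRes_block B) hxy hx hy
  rw [D.sum_branchDegree_eq, D.sum_card_branch_eq, D.card_verts, D.sum_degree hG,
    D.sum_degree_block, Nat.cast_add_one] at hB
  have hsingle := single_le_sum (fun B _ => D.interaction_nonneg B) (mem_univ B)
  linarith

theorem quadBouquetDegRes_lt_degRes (hG : G.Connected) (hn : 7 ≤ Fintype.card V)
    (ht : 1 ≤ #D.cycles) (hxy : x ≠ y) (hx : (D.branch B x).Nonempty)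
    (hy : (D.branch B y).Nonempty) :
    quadBouquetDegRes (Fintype.card V) #D.cycles < degRes G := by
  classical
  have hn' : (7 : ℝ) ≤ Fintype.card V := mod_cast hn
  have ht' : (1 : ℝ) ≤ #D.cycles := mod_cast ht
  have hB := D.le_sum_interaction hG hxy hx hy
  rw [quadBouquetDegRes_eq, D.degRes_eq hG]
  by_cases hrank : ∃ B, 3 ≤ D.rank B
  · obtain ⟨B₀, hB₀⟩ := hrank
    have hpos : 0 < ∑ B, D.interaction B := by
      refine lt_of_lt_of_le ?_ hB
      have := D.rank_add_three_le hxy hx hy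
      split_ifs <;> linarith
    linarith [D.le_sum_cycleExcess hn ht hB₀]
  · push Not at hrank
    have hthree : #{B | D.rank B = 3} = 0 :=
      card_eq_zero.mpr (filter_eq_empty_iff.mpr fun B _ => (hrank B).ne)
    rw [D.sum_cycleExcess_of_rank_le_three fun B => (hrank B).le, hthree]
    have hgap : cycleExcess (Fintype.card V) #D.cycles 3
        - cycleExcess (Fintype.card V) #D.cycles 2
          = (5 * Fintype.card V + #D.cycles - 31) / 3 := by
      unfold cycleExcess
      ring
    have hrank' : (D.rank B : ℝ) ≤ 2 := mod_cast Nat.lt_succ_iff.mp (hrank B)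
    push_cast
    split_ifs at hB <;> linarith

end Interaction

section Hub

theorem degRes_eq_of_hub (hub : ∃ z, ∀ B, z ∈ D.verts B) (hG : G.Connected) :
    degRes G = (3 * Fintype.card V + 2 * #D.cycles - 4) * (Fintype.card V - 1)
      + ∑ B ∈ D.cycles, cycleExcess (Fintype.card V) #D.cycles (D.rank B) := by
  classical
  obtain ⟨z, hz⟩ := hub
  rw [D.degRes_eq hG, sum_eq_zero (f := fun B => D.interaction B), add_zero]
  exact fun B _ => D.interaction_eq_zero fun x y hx hy =>
    Subtype.ext ((D.coe_eq_of_branch_nonempty hG hz hx).trans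
      (D.coe_eq_of_branch_nonempty hG hz hy).symm)

theorem quadBouquetDegRes_le_degRes (hub : ∃ z, ∀ B, z ∈ D.verts B) (hG : G.Connected)
    (hn : 7 ≤ Fintype.card V) (ht : 1 ≤ #D.cycles) (hB : 3 ≤ D.rank B) :
    quadBouquetDegRes (Fintype.card V) #D.cycles ≤ degRes G := by
  rw [quadBouquetDegRes_eq, D.degRes_eq_of_hub hub hG]
  gcongr
  exact D.le_sum_cycleExcess hn ht hB

theorem degRes_eq_quadBouquetDegRes_iff (hub : ∃ z, ∀ B, z ∈ D.verts B) (hG : G.Connected)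
    (hn : 7 ≤ Fintype.card V) (ht : 1 ≤ #D.cycles) :
    degRes G = quadBouquetDegRes (Fintype.card V) #D.cycles ↔
      (∀ B, D.rank B ≤ 3) ∧ #{B | D.rank B = 3} = 1 := by
  rw [quadBouquetDegRes_eq, D.degRes_eq_of_hub hub hG, add_right_inj]
  refine ⟨D.rank_of_sum_cycleExcess_eq hn ht, fun ⟨hrank, hthree⟩ => ?_⟩
  rw [D.sum_cycleExcess_of_rank_le_three hrank, hthree]
  push_cast
  ring

end Hub

end CactusDecomp

section Bouquet

variable {V W ι κ : Type*} {G : SimpleGraph V} {H : SimpleGraph W} {ℓ : ι → ℕ} {ℓ' : κ → ℕ}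

/-- A presentation of `G` as a union of cycles of lengths `ℓ i + 1` which pairwise share the vertex
`center` and nothing else. Since `SimpleGraph.cycleGraph 2` is an edge, `ℓ i = 1` stands for a
pendent edge. -/
structure Bouquet (G : SimpleGraph V) (ℓ : ι → ℕ) where
  center : V
  petal : ∀ i, SimpleGraph.cycleGraph (ℓ i + 1) ↪g G
  petal_zero : ∀ i, petal i 0 = center
  eq_of_petal_eq : ∀ {i j x y}, petal i x = petal j y → x ≠ 0 → i = j
  exists_of_adj : ∀ {u v}, G.Adj u v → ∃ i x y, petal i x = u ∧ petal i y = v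
  exists_petal : ∀ {v}, v ≠ center → ∃ i x, petal i x = v

namespace Bouquet

theorem adj_iff (b : Bouquet G ℓ) {u v : V} : G.Adj u v ↔
    ∃ i x y, (SimpleGraph.cycleGraph (ℓ i + 1)).Adj x y ∧ b.petal i x = u ∧ b.petal i y = v := by
  refine ⟨fun huv => ?_, ?_⟩
  · obtain ⟨i, x, y, rfl, rfl⟩ := b.exists_of_adj huv
    exact ⟨i, x, y, (b.petal i).map_adj_iff.mp huv, rfl, rfl⟩
  · rintro ⟨i, x, y, hxy, rfl, rfl⟩
    exact (b.petal i).map_adj_iff.mpr hxy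

theorem petal_ne_center (b : Bouquet G ℓ) {i} {x : Fin (ℓ i + 1)} (hx : x ≠ 0) :
    b.petal i x ≠ b.center := by
  rw [← b.petal_zero i]
  exact (b.petal i).injective.ne hx

theorem bijective_elim_petal (b : Bouquet G ℓ) : Function.Bijective
    fun o : Option (Σ i, Fin (ℓ i)) => o.elim b.center fun k => b.petal k.1 k.2.succ := by
  constructor
  · rintro (_ | ⟨i, k⟩) (_ | ⟨j, l⟩) h
    · rfl
    · exact absurd h.symm (b.petal_ne_center (Fin.succ_ne_zero l))
    · exact absurd h (b.petal_ne_center (Fin.succ_ne_zero k))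
    · obtain rfl := b.eq_of_petal_eq h (Fin.succ_ne_zero k)
      obtain rfl := Fin.succ_injective _ ((b.petal i).injective h)
      rfl
  · intro v
    by_cases hv : v = b.center
    · exact ⟨none, hv.symm⟩
    · obtain ⟨i, x, rfl⟩ := b.exists_petal hv
      have hx : x ≠ 0 := by
        rintro rfl
        exact hv (b.petal_zero i)
      exact ⟨some ⟨i, x.pred hx⟩, by simp⟩

/-- The bijection between the vertices of a bouquet and its center together with the noncentral
vertices of its petals. -/
noncomputable def vertexEquiv (b : Bouquet G ℓ) : Option (Σ i, Fin (ℓ i)) ≃ V :=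
  .ofBijective _ b.bijective_elim_petal

theorem vertexEquiv_trans_petal (b : Bouquet G ℓ) (b' : Bouquet H ℓ) (i : ι)
    (x : Fin (ℓ i + 1)) : b'.vertexEquiv (b.vertexEquiv.symm (b.petal i x)) = b'.petal i x := by
  obtain rfl | ⟨k, rfl⟩ := x.eq_zero_or_eq_succ
  · rw [b.petal_zero, b'.petal_zero, show b.center = b.vertexEquiv none from rfl,
      Equiv.symm_apply_apply]
    rfl
  · rw [show b.petal i k.succ = b.vertexEquiv (some ⟨i, k⟩) from rfl, Equiv.symm_apply_apply]
    rfl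

theorem nonempty_iso (b : Bouquet G ℓ) (b' : Bouquet H ℓ) : Nonempty (G ≃g H) := by
  refine ⟨⟨b.vertexEquiv.symm.trans b'.vertexEquiv, fun {u v} => ?_⟩⟩
  have hinv (i) (x : Fin (ℓ i + 1)) (w : V) :
      b'.petal i x = b'.vertexEquiv (b.vertexEquiv.symm w) ↔ b.petal i x = w := by
    rw [← b.vertexEquiv_trans_petal b', EmbeddingLike.apply_eq_iff_eq,
      EmbeddingLike.apply_eq_iff_eq]
  simp only [Equiv.trans_apply, b'.adj_iff, hinv, b.adj_iff]

/-- The bouquet with its petals reindexed along `e`. -/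
def reindex (b : Bouquet G ℓ) (e : κ ≃ ι) : Bouquet G (ℓ ∘ e) where
  center := b.center
  petal k := b.petal (e k)
  petal_zero k := b.petal_zero (e k)
  eq_of_petal_eq h hx := e.injective (b.eq_of_petal_eq h hx)
  exists_of_adj huv := by
    obtain ⟨i, h⟩ := b.exists_of_adj huv
    obtain ⟨k, rfl⟩ := e.surjective i
    exact ⟨k, h⟩
  exists_petal hv := by
    obtain ⟨i, h⟩ := b.exists_petal hv
    obtain ⟨k, rfl⟩ := e.surjective i
    exact ⟨k, h⟩

/-- Transport a bouquet along a graph isomorphism. -/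
def map (b : Bouquet G ℓ) (e : G ≃g H) : Bouquet H ℓ where
  center := e b.center
  petal i := e.toEmbedding.comp (b.petal i)
  petal_zero i := congrArg e (b.petal_zero i)
  eq_of_petal_eq h hx := b.eq_of_petal_eq (e.injective h) hx
  exists_of_adj {u v} huv := by
    obtain ⟨i, x, y, hx, hy⟩ := b.exists_of_adj (e.symm.map_adj_iff.mpr huv)
    exact ⟨i, x, y, (e.symm_apply_eq.mp hx.symm).symm, (e.symm_apply_eq.mp hy.symm).symm⟩
  exists_petal {v} hv := by
    obtain ⟨i, x, hx⟩ := b.exists_petal (mt e.symm_apply_eq.mp hv)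
    exact ⟨i, x, (e.symm_apply_eq.mp hx.symm).symm⟩

theorem nonempty_iso_of_card_eq [Fintype ι] [Fintype κ] (b : Bouquet G ℓ) (b' : Bouquet H ℓ')
    (hcard : ∀ r, #{i | ℓ i = r} = #{j | ℓ' j = r}) : Nonempty (G ≃g H) := by
  have hfiber (r : ℕ) : Nonempty ({i // ℓ i = r} ≃ {j // ℓ' j = r}) :=
    Fintype.card_eq.mp (by simpa only [Fintype.card_subtype] using hcard r)
  have e (r : ℕ) := (hfiber r).some
  have hℓ : ℓ' ∘ Equiv.ofFiberEquiv e = ℓ := funext (Equiv.ofFiberEquiv_map e)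
  exact b.nonempty_iso (hℓ ▸ b'.reindex (Equiv.ofFiberEquiv e))

open Classical in
/-- The petals of a bouquet as the blocks of a cactus; `proj i` sends everything outside the petal
`i` to the center. -/
noncomputable def cactusDecomp (b : Bouquet G ℓ) (hℓ : ∀ i, 1 ≤ ℓ i) : CactusDecomp G ι where
  verts i := univ.map (b.petal i).toEmbedding
  proj i v := if hv : v ∈ univ.map (b.petal i).toEmbedding then ⟨v, hv⟩ else
    ⟨b.center, mem_map.mpr ⟨0, mem_univ _, b.petal_zero i⟩⟩
  proj_coe _ x := dif_pos x.2
  proj_eq_of_mem {i j x y} hij hx hy := by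
    have hcenter {z} (hz : z ∈ univ.map (b.petal j).toEmbedding)
        (hzi : z ∈ univ.map (b.petal i).toEmbedding) : z = b.center := by
      obtain ⟨k, -, rfl⟩ := mem_map.mp hz
      obtain ⟨l, -, hl⟩ := mem_map.mp hzi
      by_contra hk
      exact hij (b.eq_of_petal_eq hl.symm fun h => hk (h ▸ b.petal_zero j)).symm
    split_ifs with hxi hyi hyi
    · simp only [hcenter hx hxi, hcenter hy hyi]
    · simp only [hcenter hx hxi]
    · simp only [hcenter hy hyi]
    · rfl
  exists_mem_of_adj huv := by
    obtain ⟨i, x, y, rfl, rfl⟩ := b.exists_of_adj huv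
    exact ⟨i, mem_map_of_mem _ (mem_univ x), mem_map_of_mem _ (mem_univ y)⟩
  rank := ℓ
  rank_pos := hℓ
  iso i := by
    have hrange : ((univ.map (b.petal i).toEmbedding : Finset V) : Set V)
      = Set.range (b.petal i) := by simp
    rw [hrange]
    exact ⟨(b.petal i).isoInduceRange⟩

theorem exists_forall_mem_verts (b : Bouquet G ℓ) (hℓ : ∀ i, 1 ≤ ℓ i) :
    ∃ z, ∀ i, z ∈ (b.cactusDecomp hℓ).verts i :=
  ⟨b.center, fun i => mem_map.mpr ⟨0, mem_univ _, b.petal_zero i⟩⟩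

end Bouquet

theorem exists_iso_cycleGraph_map_zero {r : ℕ} (e : SimpleGraph.cycleGraph (r + 1) ≃g H) (z : W) :
    ∃ e' : SimpleGraph.cycleGraph (r + 1) ≃g H, e' 0 = z := by
  rw [SimpleGraph.cycleGraph_eq_circulantGraph] at e ⊢
  refine ⟨⟨(Equiv.addRight (e.symm z)).trans e.toEquiv, fun {x y} => ?_⟩, ?_⟩
  · exact e.map_adj_iff.trans SimpleGraph.circulantGraph_adj_translate
  · change e (0 + e.symm z) = z
    rw [zero_add, e.apply_symm_apply]

theorem CactusDecomp.nonempty_bouquet (D : CactusDecomp G ι) (hub : ∃ z, ∀ B, z ∈ D.verts B)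
    (hG : G.Connected) : Nonempty (Bouquet G D.rank) := by
  obtain ⟨z, hz⟩ := hub
  choose e he using fun B => (D.iso B).elim fun e => exists_iso_cycleGraph_map_zero e ⟨z, hz B⟩
  have hmem {B v} (hv : v ∈ D.verts B) : (e B ((e B).symm ⟨v, hv⟩) : V) = v := by
    rw [(e B).apply_symm_apply]
  refine ⟨{ center := z
            petal := fun B => (SimpleGraph.Embedding.induce _).comp (e B).toEmbedding
            petal_zero := fun B => congrArg Subtype.val (he B)
            eq_of_petal_eq := fun {B B' x y} hxy hx => ?_
            exists_of_adj := fun huv => ?_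
            exists_petal := fun {v} hv => ?_ }⟩
  · have hxy : (e B x : V) = e B' y := hxy
    refine D.eq_of_mem_of_mem (e B x).2 (hz B) (hxy ▸ (e B' y).2) (hz B') fun hxz => hx ?_
    exact (e B).injective (Subtype.ext (hxz.trans (congrArg Subtype.val (he B)).symm))
  · obtain ⟨B, hu, hv⟩ := D.exists_mem_of_adj huv
    exact ⟨B, _, _, hmem hu, hmem hv⟩
  · obtain ⟨p⟩ := hG.preconnected v z
    obtain ⟨B, hvB, -⟩ := D.exists_mem_of_adj (p.adj_snd (p.not_nil_of_ne hv))
    exact ⟨B, _, hmem hvB⟩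

end Bouquet

theorem adj_iff_cycleGraph_adj {V : Type*} {G : SimpleGraph V} {r : ℕ} {f : Fin (r + 1) → V}
    (hf : ∀ {x y}, x < y → (G.Adj (f x) (f y) ↔ x.val + 1 = y ∨ x.val = 0 ∧ y.val = r))
    {x y : Fin (r + 1)} : G.Adj (f x) (f y) ↔ (SimpleGraph.cycleGraph (r + 1)).Adj x y := by
  have hcycle {x y : Fin (r + 1)} (hxy : x < y) : (SimpleGraph.cycleGraph (r + 1)).Adj x y ↔
      x.val + 1 = y ∨ x.val = 0 ∧ y.val = r := by
    rw [SimpleGraph.cycleGraph_adj', Fin.coe_sub_iff_lt.mpr hxy, Fin.sub_val_of_le hxy.le]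
    omega
  obtain h | rfl | h := lt_trichotomy x y
  · rw [hf h, hcycle h]
  · simp only [SimpleGraph.irrefl]
  · rw [G.adj_comm, (SimpleGraph.cycleGraph _).adj_comm, hf h, hcycle h]

section Models

variable {a b c n t : ℕ}

/-- The ranks of the petals of a bouquet of `a` quadrilaterals, `b` triangles and `c` pendent
edges. -/
def bouquetRank (a b c : ℕ) : Fin a ⊕ Fin b ⊕ Fin c → ℕ :=
  Sum.elim (fun _ => 3) (Sum.elim (fun _ => 2) fun _ => 1)

theorem one_le_bouquetRank (i) : 1 ≤ bouquetRank a b c i := by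
  rcases i with _ | _ | _
  exacts [Nat.le_add_left 1 2, Nat.le_add_left 1 1, le_rfl]

theorem card_filter_bouquetRank (r : ℕ) : #{i | bouquetRank a b c i = r}
    = (if 3 = r then a else 0) + ((if 2 = r then b else 0) + if 1 = r then c else 0) := by
  rw [card_filter, Fintype.sum_sum_type, Fintype.sum_sum_type]
  change (∑ _ : Fin a, if 3 = r then 1 else 0) + ((∑ _ : Fin b, if 2 = r then 1 else 0)
    + ∑ _ : Fin c, if 1 = r then 1 else 0) = _
  simp

/-- The numbering of a bouquet of `a` quadrilaterals, `b` triangles and `c` pendent edges used by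
`G0` and `G5g`: the center is `0` and the other vertices of the petal `i` are
`petalOffset a b c i + k` for `1 ≤ k ≤ bouquetRank a b c i`. -/
def petalOffset (a b c : ℕ) : Fin a ⊕ Fin b ⊕ Fin c → ℕ :=
  Sum.elim (fun i => 2 * b + 3 * i) (Sum.elim (fun i => 2 * i) fun i => 2 * b + 3 * a + i)

theorem petalOffset_add_lt {i k} (hk : k ≤ bouquetRank a b c i) :
    petalOffset a b c i + k < 3 * a + 2 * b + c + 1 := by
  rcases i with i | i | i <;>
    simp only [petalOffset, bouquetRank, Sum.elim_inl, Sum.elim_inr] at * <;> omega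

theorem petalOffset_add_injective {i j k l} (hk : k ≠ 0) (hki : k ≤ bouquetRank a b c i)
    (hl : l ≠ 0) (hlj : l ≤ bouquetRank a b c j)
    (h : petalOffset a b c i + k = petalOffset a b c j + l) : i = j := by
  rcases i with i | i | i <;> rcases j with j | j | j <;>
    simp only [petalOffset, bouquetRank, Sum.elim_inl, Sum.elim_inr, reduceCtorEq, Sum.inl.injEq,
      Sum.inr.injEq, Fin.ext_iff] at * <;> omega

theorem exists_petalOffset_lt {v : ℕ} (hv : v ≠ 0) (hvn : v < 3 * a + 2 * b + c + 1) :
    ∃ i, petalOffset a b c i < v ∧ v ≤ petalOffset a b c i + bouquetRank a b c i := by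
  obtain h | h := le_or_gt v (2 * b)
  · refine ⟨.inr (.inl ⟨(v - 1) / 2, by omega⟩), ?_⟩
    simp only [petalOffset, bouquetRank, Sum.elim_inl, Sum.elim_inr]
    omega
  · obtain h | h := le_or_gt v (2 * b + 3 * a)
    · refine ⟨.inl ⟨(v - 2 * b - 1) / 3, by omega⟩, ?_⟩
      simp only [petalOffset, bouquetRank, Sum.elim_inl]
      omega
    · refine ⟨.inr (.inr ⟨v - 2 * b - 3 * a - 1, by omega⟩), ?_⟩
      simp only [petalOffset, bouquetRank, Sum.elim_inr]
      omega

/-- The vertex `x` of the petal `i` in the numbering given by `petalOffset`. -/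
def petalVertex (hn : n = 3 * a + 2 * b + c + 1) (i) (x : Fin (bouquetRank a b c i + 1)) : Fin n :=
  ⟨if x.val = 0 then 0 else petalOffset a b c i + x, by
    have := petalOffset_add_lt (Nat.lt_succ_iff.mp x.2)
    split_ifs <;> omega⟩

theorem petalVertex_eq (hn : n = 3 * a + 2 * b + c + 1) {i} {v : Fin n}
    (hv : petalOffset a b c i < v) (hvi : v ≤ petalOffset a b c i + bouquetRank a b c i) :
    petalVertex hn i ⟨v - petalOffset a b c i, by omega⟩ = v := by
  ext
  simp only [petalVertex]
  split_ifs <;> omega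

/-- The bouquet structure of a graph in the numbering given by `petalOffset`. -/
def Bouquet.ofNumbering {G : SimpleGraph (Fin n)} (hn : n = 3 * a + 2 * b + c + 1)
    (hadj : ∀ i {x y}, x < y → (G.Adj (petalVertex hn i x) (petalVertex hn i y) ↔
      x.val + 1 = y ∨ x.val = 0 ∧ y.val = bouquetRank a b c i))
    (hpetal : ∀ {u v : Fin n}, G.Adj u v → u.val ≠ 0 → v.val ≠ 0 → ∃ i,
      petalOffset a b c i < u ∧ u ≤ petalOffset a b c i + bouquetRank a b c i ∧
      petalOffset a b c i < v ∧ v ≤ petalOffset a b c i + bouquetRank a b c i) :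
    Bouquet G (bouquetRank a b c) where
  center := ⟨0, by omega⟩
  petal i := ⟨⟨petalVertex hn i, fun x y hxy => by
    simp only [petalVertex, Fin.mk.injEq] at hxy
    split_ifs at hxy <;> omega⟩, adj_iff_cycleGraph_adj (hadj i)⟩
  petal_zero i := rfl
  eq_of_petal_eq {i j x y} hxy hx := by
    have hx : x.val ≠ 0 := Fin.val_ne_zero_iff.mpr hx
    have hxy : (petalVertex hn i x).val = petalVertex hn j y := congrArg Fin.val hxy
    simp only [petalVertex, if_neg hx] at hxy
    split_ifs at hxy with hy
    · omega
    · exact petalOffset_add_injective hx (Nat.lt_succ_iff.mp x.2) hy (Nat.lt_succ_iff.mp y.2) hxy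
  exists_of_adj {u v} huv := by
    have hne : u.val ≠ v.val := fun h => huv.ne (Fin.ext h)
    by_cases hu : u.val = 0
    · obtain ⟨i, hi, hi'⟩ := exists_petalOffset_lt (hu ▸ hne.symm) (v.2.trans_eq hn)
      exact ⟨i, 0, _, Fin.ext hu.symm, petalVertex_eq hn hi hi'⟩
    · by_cases hv : v.val = 0
      · obtain ⟨i, hi, hi'⟩ := exists_petalOffset_lt hu (u.2.trans_eq hn)
        exact ⟨i, _, 0, petalVertex_eq hn hi hi', Fin.ext hv.symm⟩
      · obtain ⟨i, hui, hui', hvi, hvi'⟩ := hpetal huv hu hv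
        exact ⟨i, _, _, petalVertex_eq hn hui hui', petalVertex_eq hn hvi hvi'⟩
  exists_petal {v} hv := by
    obtain ⟨i, hi, hi'⟩ := exists_petalOffset_lt (fun h => hv (Fin.ext h)) (v.2.trans_eq hn)
    exact ⟨i, _, petalVertex_eq hn hi hi'⟩

/-- `G0 n t` as a bouquet. -/
def bouquetG0 (hn : n = 3 * 0 + 2 * t + c + 1) : Bouquet (G0 n t) (bouquetRank 0 t c) :=
  .ofNumbering hn
    (fun i ⟨x, hx⟩ ⟨y, hy⟩ hxy => by
      rw [Fin.mk_lt_mk] at hxy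
      simp only [G0, SimpleGraph.fromRel_adj, petalVertex, ne_eq, Fin.mk.injEq, Nat.odd_iff]
      rcases i with ⟨i, hi⟩ | ⟨i, hi⟩ | ⟨i, hi⟩ <;>
        simp only [petalOffset, bouquetRank, Sum.elim_inl, Sum.elim_inr] at * <;>
        interval_cases y <;> interval_cases x <;>
        simp only [↓reduceIte, one_ne_zero, OfNat.ofNat_ne_zero, true_and, true_or, and_true,
          false_and, or_false, iff_true, or_true] <;>
        omega)
    (fun {u v} huv hu hv => by
      simp only [G0, SimpleGraph.fromRel_adj, Nat.odd_iff] at huv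
      refine ⟨.inr (.inl ⟨(u.val - 1) / 2, by omega⟩), ?_⟩
      simp only [petalOffset, bouquetRank, Sum.elim_inl, Sum.elim_inr]
      omega)

/-- `G5g n (t + 1)` as a bouquet. -/
def bouquetG5 (hn : n = 3 * 1 + 2 * t + c + 1) : Bouquet (G5g n (t + 1)) (bouquetRank 1 t c) :=
  .ofNumbering hn
    (fun i ⟨x, hx⟩ ⟨y, hy⟩ hxy => by
      rw [Fin.mk_lt_mk] at hxy
      simp only [G5g, SimpleGraph.fromRel_adj, petalVertex, ne_eq, Fin.mk.injEq, Nat.odd_iff]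
      rcases i with ⟨i, hi⟩ | ⟨i, hi⟩ | ⟨i, hi⟩ <;>
        simp only [petalOffset, bouquetRank, Sum.elim_inl, Sum.elim_inr] at * <;>
        interval_cases y <;> interval_cases x <;>
        simp only [↓reduceIte, one_ne_zero, OfNat.ofNat_ne_zero, true_and, true_or, and_true,
          false_and, or_false, iff_true, or_true] <;>
        omega)
    (fun {u v} huv hu hv => by
      simp only [G5g, SimpleGraph.fromRel_adj, Nat.odd_iff] at huv
      by_cases hut : u.val ≤ 2 * t
      · refine ⟨.inr (.inl ⟨(u.val - 1) / 2, by omega⟩), ?_⟩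
        simp only [petalOffset, bouquetRank, Sum.elim_inl, Sum.elim_inr]
        omega
      · refine ⟨.inl 0, ?_⟩
        simp only [petalOffset, bouquetRank, Sum.elim_inl, Fin.val_zero]
        omega)

end Models

section Cactus

variable {V : Type*} {G : SimpleGraph V} {H H₁ H₂ : G.Subgraph} {u v w x y : V}

theorem isCycleSubgraph_toSubgraph {p : G.Walk u u} (hp : p.IsCycle) :
    IsCycleSubgraph p.toSubgraph :=
  ⟨SimpleGraph.Subgraph.connected_iff'.mp p.toSubgraph_connected, fun _ hv =>
    hp.ncard_neighborSet_toSubgraph_eq_two (p.mem_verts_toSubgraph.mp hv)⟩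

theorem reachable_of_coe_connected {K : SimpleGraph V} (hH : H.coe.Connected)
    (hHK : H.spanningCoe ≤ K) (hx : x ∈ H.verts) (hy : y ∈ H.verts) : K.Reachable x y :=
  (hH.preconnected ⟨x, hx⟩ ⟨y, hy⟩).map ⟨Subtype.val, fun h => hHK h⟩

theorem IsCycleSubgraph.eq_of_le (h₁ : IsCycleSubgraph H₁) (h₂ : IsCycleSubgraph H₂)
    (hle : H₁ ≤ H₂) (hverts : H₁.verts = H₂.verts) : H₁ = H₂ := by
  refine le_antisymm hle ⟨hverts.ge, fun {x y} hxy => ?_⟩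
  have hx : x ∈ H₂.verts := hxy.fst_mem
  have hfinite : {z | H₂.Adj x z}.Finite :=
    Set.finite_of_ncard_ne_zero ((h₂.2 x hx).trans_ne two_ne_zero)
  have hnbhd : {z | H₁.Adj x z} = {z | H₂.Adj x z} :=
    Set.eq_of_subset_of_ncard_le (fun z hz => hle.2 hz)
      ((h₂.2 x hx).trans_le (h₁.2 x (hverts ▸ hx)).ge) hfinite
  exact hnbhd.ge hxy

theorem IsCycleSubgraph.exists_isCycle [Finite V] (hH : IsCycleSubgraph H) :
    ∃ v, ∃ p : G.Walk v v, p.IsCycle ∧ p.toSubgraph = H := by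
  obtain ⟨⟨v, hv⟩⟩ := hH.1.nonempty
  have hmem {w} : (H.spanningCoe.neighborSet w).Nonempty → w ∈ H.verts :=
    fun ⟨_, hu⟩ => H.edge_vert hu
  have hcycles : H.spanningCoe.IsCycles := fun w hw => hH.2 w (hmem hw)
  obtain ⟨p, hp, hverts⟩ := hcycles.exists_cycle_toSubgraph_verts_eq_connectedComponentSupp
    (c := H.spanningCoe.connectedComponentMk v) (v := v) rfl
    (Set.nonempty_of_ncard_ne_zero ((hH.2 v hv).trans_ne two_ne_zero))
  have hsupp : (H.spanningCoe.connectedComponentMk v).supp = H.verts := by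
    ext w
    rw [SimpleGraph.ConnectedComponent.mem_supp_iff, SimpleGraph.ConnectedComponent.eq]
    refine ⟨fun ⟨q⟩ => ?_, fun hw => reachable_of_coe_connected hH.1 le_rfl hw hv⟩
    cases q with
    | nil => exact hv
    | cons h _ => exact H.edge_vert h
  have hpH : (p.mapLe H.spanningCoe_le).toSubgraph.verts = H.verts := by
    rw [← hsupp, ← hverts, SimpleGraph.Walk.verts_toSubgraph, SimpleGraph.Walk.verts_toSubgraph,
      SimpleGraph.Walk.support_mapLe_eq_support]
  refine ⟨v, p.mapLe H.spanningCoe_le, hp.mapLe _,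
    (isCycleSubgraph_toSubgraph (hp.mapLe _)).eq_of_le hH ⟨hpH.le, fun {x y} hxy => ?_⟩ hpH⟩
  rw [SimpleGraph.Walk.adj_toSubgraph_mapLe] at hxy
  exact p.toSubgraph.adj_sub hxy

theorem IsCycleSubgraph.not_isBridge [Finite V] (hH : IsCycleSubgraph H) (hxy : H.Adj x y) :
    ¬ G.IsBridge s(x, y) := by
  obtain ⟨_, p, hp, rfl⟩ := hH.exists_isCycle
  exact fun hb => hb.notMem_edges_of_isCycle hp (p.mem_edges_toSubgraph.mp hxy)

theorem not_isBridge_of_isPath_cons {F K : SimpleGraph V} (hFK : F ≤ K) {hadj : F.Adj x w}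
    {P : F.Walk w y} (hP : (SimpleGraph.Walk.cons hadj P).IsPath)
    (hxy : (K.deleteEdges {s(x, w)}).Reachable x y) : ¬ K.IsBridge s(x, w) := by
  rw [SimpleGraph.isBridge_iff, not_not]
  rw [SimpleGraph.Walk.cons_isPath_iff] at hP
  refine hxy.trans (SimpleGraph.Reachable.symm ⟨P.transfer _ fun e he => ?_⟩)
  rw [SimpleGraph.edgeSet_deleteEdges]
  refine ⟨SimpleGraph.edgeSet_mono hFK (P.edges_subset_edgeSet he), ?_⟩
  rintro rfl
  exact hP.2 (P.fst_mem_support_of_mem_edges he)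

-- The first edge of a path in a spanning forest of the complement of `H` lies on a cycle, since
-- `H` closes up the path; such a cycle cannot avoid `H`.
theorem exists_isCycle_of_reachable_deleteEdges [Finite V] (hH : H.coe.Connected)
    (hx : x ∈ H.verts) (hy : y ∈ H.verts) (hxy : x ≠ y)
    (hr : (G.deleteEdges H.edgeSet).Reachable x y) : ∃ u, ∃ p : G.Walk u u, p.IsCycle ∧
      (∃ e ∈ p.edges, e ∈ H.edgeSet) ∧ ∃ e ∈ p.edges, e ∉ H.edgeSet := by
  obtain ⟨F, hF, hacyclic, hFr⟩ := SimpleGraph.exists_isAcyclic_reachable_eq_le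
    (G := G.deleteEdges H.edgeSet)
  obtain ⟨P, hP⟩ := (hFr ▸ hr).exists_isPath
  cases P with
  | nil => exact absurd rfl hxy
  | @cons _ w _ hadj P' =>
    have hxw : s(x, w) ∉ H.edgeSet := (SimpleGraph.deleteEdges_adj.mp (hF hadj)).2
    have hbridge : ¬ (F ⊔ H.spanningCoe).IsBridge s(x, w) := by
      refine not_isBridge_of_isPath_cons le_sup_left hP
        (reachable_of_coe_connected hH (fun a b hab => ?_) hx hy)
      rw [SimpleGraph.deleteEdges_adj]
      exact ⟨Or.inr hab, fun h => hxw (Set.mem_singleton_iff.mp h ▸ hab)⟩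
    rw [SimpleGraph.isBridge_iff_forall_cycle_notMem (Or.inl hadj)] at hbridge
    push Not at hbridge
    obtain ⟨u, p, hp, hxwp⟩ := hbridge
    have hle : F ⊔ H.spanningCoe ≤ G :=
      sup_le (hF.trans (SimpleGraph.deleteEdges_le _)) H.spanningCoe_le
    refine ⟨u, p.mapLe hle, hp.mapLe hle, ?_, s(x, w), by simpa, hxw⟩
    rw [SimpleGraph.Walk.edges_mapLe_eq_edges]
    by_contra! hcon
    refine hacyclic (p.transfer F fun e he => ?_) (hp.transfer _)
    have he' := p.edges_subset_edgeSet he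
    rw [SimpleGraph.edgeSet_sup] at he'
    exact he'.resolve_right fun h => hcon e he (by simpa using h)

theorem IsCactus.eq_of_mem_of_mem [Finite V] (hG : IsCactus G) (h₁ : IsCycleSubgraph H₁)
    (h₂ : IsCycleSubgraph H₂) (hxy : x ≠ y) (hx₁ : x ∈ H₁.verts) (hx₂ : x ∈ H₂.verts)
    (hy₁ : y ∈ H₁.verts) (hy₂ : y ∈ H₂.verts) : H₁ = H₂ := by
  by_contra hne
  have hcard := hG.2 H₁ H₂ h₁ h₂ hne
  rw [Set.ncard_le_one (Set.toFinite _)] at hcard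
  exact hxy (hcard x ⟨hx₁, hx₂⟩ y ⟨hy₁, hy₂⟩)

theorem IsCactus.eq_of_adj_of_adj [Finite V] (hG : IsCactus G) (h₁ : IsCycleSubgraph H₁)
    (h₂ : IsCycleSubgraph H₂) (hxy₁ : H₁.Adj x y) (hxy₂ : H₂.Adj x y) : H₁ = H₂ :=
  hG.eq_of_mem_of_mem h₁ h₂ hxy₁.ne hxy₁.fst_mem hxy₂.fst_mem hxy₁.snd_mem hxy₂.snd_mem

/-- The subgraphs of `G` that are the blocks of `G` when `G` is a cactus: the cycles and the
bridges. -/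
def IsCactusBlock (H : G.Subgraph) : Prop :=
  IsCycleSubgraph H ∨ ∃ u v, ∃ h : G.Adj u v, G.IsBridge s(u, v) ∧ H = G.subgraphOfAdj h

namespace IsCactusBlock

theorem coe_connected (hH : IsCactusBlock H) : H.coe.Connected := by
  obtain h | ⟨u, v, h, -, rfl⟩ := hH
  · exact h.1
  · exact SimpleGraph.Subgraph.connected_iff'.mp (SimpleGraph.Subgraph.subgraphOfAdj_connected h)

theorem eq_of_adj_of_adj [Finite V] (hG : IsCactus G) (h₁ : IsCactusBlock H₁)
    (h₂ : IsCactusBlock H₂) (hxy₁ : H₁.Adj x y) (hxy₂ : H₂.Adj x y) : H₁ = H₂ := by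
  obtain h₁ | ⟨u, v, huv, hb, rfl⟩ := h₁ <;> obtain h₂ | ⟨u', v', huv', hb', rfl⟩ := h₂
  · exact hG.eq_of_adj_of_adj h₁ h₂ hxy₁ hxy₂
  · exact absurd (hxy₂ ▸ hb') (h₁.not_isBridge hxy₁)
  · exact absurd (hxy₁ ▸ hb) (h₂.not_isBridge hxy₂)
  · have he : s(u, v) = s(u', v') := Eq.trans hxy₁ (Eq.symm hxy₂)
    obtain ⟨rfl, rfl⟩ | ⟨rfl, rfl⟩ := Sym2.eq_iff.mp he
    · rfl
    · exact SimpleGraph.subgraphOfAdj_symm _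

theorem eq_of_reachable [Finite V] (hG : IsCactus G) (hH : IsCactusBlock H) (hx : x ∈ H.verts)
    (hy : y ∈ H.verts) (hr : (G.deleteEdges H.edgeSet).Reachable x y) : x = y := by
  by_contra hxy
  obtain hH | ⟨u, v, huv, hb, rfl⟩ := hH
  · obtain ⟨_, p, hp, ⟨⟨a, b⟩, he, heH⟩, f, hf, hfH⟩ :=
      exists_isCycle_of_reachable_deleteEdges hH.1 hx hy hxy hr
    have hpH : p.toSubgraph = H := hG.eq_of_adj_of_adj (isCycleSubgraph_toSubgraph hp) hH
      (p.mem_edges_toSubgraph.mpr he) heH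
    exact hfH (hpH ▸ p.mem_edges_toSubgraph.mpr hf)
  · rw [SimpleGraph.edgeSet_subgraphOfAdj] at hr
    rw [SimpleGraph.isBridge_iff] at hb
    obtain ⟨rfl | rfl, rfl | rfl⟩ := And.intro hx hy
    exacts [hxy rfl, hb hr, hb hr.symm, hxy rfl]

theorem isInduced [Finite V] (hG : IsCactus G) (hH : IsCactusBlock H) : H.IsInduced := by
  intro x hx y hy hxy
  by_contra hn
  exact hxy.ne (hH.eq_of_reachable hG hx hy (SimpleGraph.Adj.reachable
    (SimpleGraph.deleteEdges_adj.mpr ⟨hxy, hn⟩)))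

theorem exists_adj (hxy : G.Adj x y) : ∃ H : G.Subgraph, IsCactusBlock H ∧ H.Adj x y := by
  by_cases hb : G.IsBridge s(x, y)
  · exact ⟨G.subgraphOfAdj hxy, .inr ⟨x, y, hxy, hb, rfl⟩, rfl⟩
  · rw [SimpleGraph.isBridge_iff_forall_cycle_notMem hxy] at hb
    push Not at hb
    obtain ⟨w, p, hp, he⟩ := hb
    exact ⟨p.toSubgraph, .inl (isCycleSubgraph_toSubgraph hp), p.mem_edges_toSubgraph.mpr he⟩

end IsCactusBlock

theorem exists_reachable_deleteEdges (hG : G.Connected) (hH : H.verts.Nonempty) (w : V) :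
    ∃ x : H.verts, (G.deleteEdges H.edgeSet).Reachable w x := by
  obtain ⟨y, hy⟩ := hH
  obtain ⟨p⟩ := hG.preconnected w y
  induction p with
  | nil => exact ⟨⟨_, hy⟩, .refl _⟩
  | @cons a b _ hab _ ih =>
    obtain ⟨x, hbx⟩ := ih hy
    by_cases he : s(a, b) ∈ H.edgeSet
    · exact ⟨⟨a, H.edge_vert he⟩, .refl _⟩
    · exact ⟨x, .trans (SimpleGraph.Adj.reachable
        (SimpleGraph.deleteEdges_adj.mpr ⟨hab, he⟩)) hbx⟩

theorem toSubgraph_adj_getVert_iff {p : G.Walk u u} (hp : p.IsCycle) {r i j : ℕ}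
    (hr : p.length = r + 1) (hij : i < j) (hj : j ≤ r) :
    p.toSubgraph.Adj (p.getVert i) (p.getVert j) ↔ i + 1 = j ∨ i = 0 ∧ j = r := by
  have hinj {k l : ℕ} (hk : k ≤ r) (hl : l ≤ r) (h : p.getVert k = p.getVert l) : k = l :=
    hp.getVert_injOn' (by simp only [Set.mem_ofPred_eq]; omega)
      (by simp only [Set.mem_ofPred_eq]; omega) h
  have hwrap : p.getVert (r + 1) = p.getVert 0 := by
    rw [← hr, p.getVert_length, p.getVert_zero]
  rw [SimpleGraph.Walk.toSubgraph_adj_iff]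
  constructor
  · rintro ⟨k, hk, hkr⟩
    obtain ⟨l, hl, hkl, h⟩ : ∃ l ≤ r, p.getVert (k + 1) = p.getVert l ∧
        (l = k + 1 ∨ k = r ∧ l = 0) := by
      obtain hk' | rfl : k + 1 ≤ r ∨ k = r := by omega
      · exact ⟨k + 1, hk', rfl, .inl rfl⟩
      · exact ⟨0, Nat.zero_le k, hwrap, .inr ⟨rfl, rfl⟩⟩
    rw [hkl] at hk
    obtain ⟨hki, hlj⟩ | ⟨hkj, hli⟩ := Sym2.eq_iff.mp hk
    · have := hinj (by omega) (by omega) hki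
      have := hinj (by omega) (by omega) hlj
      omega
    · have := hinj (by omega) (by omega) hkj
      have := hinj (by omega) (by omega) hli
      omega
  · rintro (rfl | ⟨rfl, rfl⟩)
    · exact ⟨i, rfl, by omega⟩
    · exact ⟨j, by rw [hwrap, Sym2.eq_swap], by omega⟩

theorem exists_embedding_range_eq_verts {p : G.Walk u u} (hp : p.IsCycle)
    (hind : p.toSubgraph.IsInduced) : ∃ r, 2 ≤ r ∧
      ∃ f : SimpleGraph.cycleGraph (r + 1) ↪g G, Set.range f = p.toSubgraph.verts := by
  have hlen := hp.three_le_length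
  obtain ⟨r, hr⟩ : ∃ r, p.length = r + 1 := Nat.exists_eq_succ_of_ne_zero (by omega)
  have hmem (i : ℕ) : p.getVert i ∈ p.toSubgraph.verts :=
    p.mem_verts_toSubgraph.mpr (p.getVert_mem_support i)
  have hinj : Function.Injective fun i : Fin (r + 1) => p.getVert i := fun i j h =>
    Fin.ext (hp.getVert_injOn' (by simp only [Set.mem_ofPred_eq]; omega)
      (by simp only [Set.mem_ofPred_eq]; omega) h)
  have hadj {i j : Fin (r + 1)} (hij : i < j) :
      G.Adj (p.getVert i) (p.getVert j) ↔ i.val + 1 = j ∨ i.val = 0 ∧ j.val = r :=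
    ⟨fun h => (toSubgraph_adj_getVert_iff hp hr hij (by omega)).mp (hind (hmem i) (hmem j) h),
      fun h => p.toSubgraph.adj_sub ((toSubgraph_adj_getVert_iff hp hr hij (by omega)).mpr h)⟩
  refine ⟨r, by omega, ⟨⟨_, hinj⟩, adj_iff_cycleGraph_adj hadj⟩,
    (Set.range_subset_iff.mpr fun i : Fin (r + 1) => hmem i).antisymm fun w hw => ?_⟩
  obtain ⟨i, rfl, hi⟩ := SimpleGraph.Walk.mem_support_iff_exists_getVert.mp
    (p.mem_verts_toSubgraph.mp hw)
  obtain hi' | rfl : i ≤ r ∨ i = r + 1 := by omega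
  · exact ⟨⟨i, Nat.lt_succ_of_le hi'⟩, rfl⟩
  · exact ⟨0, by simp [← hr]⟩

theorem exists_embedding_range_eq_pair (huv : G.Adj u v) :
    ∃ f : SimpleGraph.cycleGraph 2 ↪g G, Set.range f = {u, v} := by
  rw [SimpleGraph.cycleGraph_two_eq_top]
  have hinj : Function.Injective ![u, v] := by
    intro i j
    fin_cases i <;> fin_cases j <;> simp [huv.ne, huv.ne']
  have hadj (i j : Fin 2) : G.Adj (![u, v] i) (![u, v] j) ↔ i ≠ j := by
    fin_cases i <;> fin_cases j <;> simp [huv, huv.symm]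
  exact ⟨⟨⟨![u, v], hinj⟩, fun {i j} => hadj i j⟩, Matrix.range_cons_cons_empty u v ![]⟩

theorem IsCactusBlock.exists_embedding [Finite V] (hG : IsCactus G) (hH : IsCactusBlock H) :
    ∃ r, 1 ≤ r ∧ (r ≠ 1 ↔ IsCycleSubgraph H) ∧
      ∃ f : SimpleGraph.cycleGraph (r + 1) ↪g G, Set.range f = H.verts := by
  have hind := hH.isInduced hG
  obtain hcyc | ⟨u, v, huv, hb, rfl⟩ := hH
  · obtain ⟨v, p, hp, rfl⟩ := hcyc.exists_isCycle
    obtain ⟨r, hr, hf⟩ := exists_embedding_range_eq_verts hp hind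
    exact ⟨r, by omega, iff_of_true (by omega) hcyc, hf⟩
  · exact ⟨1, le_rfl, iff_of_false (fun h => h rfl) fun hcyc => hcyc.not_isBridge rfl hb,
      exists_embedding_range_eq_pair huv⟩

theorem IsCactus.exists_cactusDecomp [Finite V] (hG : IsCactus G) :
    ∃ D : CactusDecomp G {H : G.Subgraph // IsCactusBlock H},
      ∀ B, D.rank B ≠ 1 ↔ IsCycleSubgraph B.1 := by
  classical
  choose rank rank_pos rank_ne_one f range_f using
    fun B : {H : G.Subgraph // IsCactusBlock H} => B.2.exists_embedding hG
  have hverts (B : {H : G.Subgraph // IsCactusBlock H}) :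
      ((Set.toFinite B.1.verts).toFinset : Set V) = B.1.verts := Set.Finite.coe_toFinset _
  choose proj reachable_proj using fun B : {H : G.Subgraph // IsCactusBlock H} =>
    exists_reachable_deleteEdges hG.1 ((range_f B) ▸ Set.range_nonempty (f B))
  refine ⟨{
    verts := fun B => (Set.toFinite B.1.verts).toFinset
    proj := fun B x => ⟨proj B x, by simp⟩
    proj_coe := fun B x => ?_
    proj_eq_of_mem := fun {B B' x y} hne hx hy => ?_
    exists_mem_of_adj := fun {x y} hxy => ?_
    rank := rank
    rank_pos := rank_pos
    iso := fun B => ?_ }, rank_ne_one⟩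
  · exact Subtype.ext (B.2.eq_of_reachable hG (by simp) ((hverts B).subset x.2)
      (reachable_proj B x).symm)
  · rw [Set.Finite.mem_toFinset] at hx hy
    have hdisj : B'.1.spanningCoe ≤ G.deleteEdges B.1.edgeSet := fun a b hab =>
      SimpleGraph.deleteEdges_adj.mpr ⟨B'.1.adj_sub hab, fun h =>
        hne (Subtype.ext (B.2.eq_of_adj_of_adj hG B'.2 h hab))⟩
    exact Subtype.ext (B.2.eq_of_reachable hG (proj B x).2 (proj B y).2
      ((reachable_proj B x).symm.trans ((reachable_of_coe_connected B'.2.coe_connected hdisj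
        hx hy).trans (reachable_proj B y))))
  · obtain ⟨H, hH, hadj⟩ := IsCactusBlock.exists_adj hxy
    exact ⟨⟨H, hH⟩, by simpa using hadj.fst_mem, by simpa using hadj.snd_mem⟩
  · rw [hverts, ← range_f B]
    exact ⟨(f B).isoInduceRange⟩

theorem CactusDecomp.card_cycles_eq_numCycles [Fintype {H : G.Subgraph // IsCactusBlock H}]
    {D : CactusDecomp G {H : G.Subgraph // IsCactusBlock H}}
    (hD : ∀ B, D.rank B ≠ 1 ↔ IsCycleSubgraph B.1) : #D.cycles = numCycles G := by
  have hmem (B) : B ∈ D.cycles ↔ IsCycleSubgraph B.1 := (mem_filter_univ B).trans (hD B)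
  rw [numCycles, ← Set.ncard_coe_finset]
  exact Set.ncard_congr (fun B _ => B.1) (fun B => (hmem B).mp)
    (fun _ _ _ _ => Subtype.ext) fun H hH => ⟨⟨H, .inl hH⟩, (hmem _).mpr hH, rfl⟩

end Cactus

namespace CactusDecomp

section Count

variable {V ι : Type*} {G : SimpleGraph V} [Fintype ι] (D : CactusDecomp G ι)

theorem card_eq [Fintype V] (hG : G.Connected) : Fintype.card V
    = #{B | D.rank B = 1} + 2 * #D.cycles + ∑ B, (D.rank B - 2) + 1 := by
  have hsum : ∑ B, D.rank B + 1 = Fintype.card V := by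
    have := D.sum_rank hG
    rify
    linarith
  have hrank (B) : D.rank B = (if D.rank B = 1 then 1 else 0)
      + 2 * (if D.rank B ≠ 1 then 1 else 0) + (D.rank B - 2) := by
    have := D.rank_pos B
    split_ifs <;> omega
  rw [← hsum, cycles, card_filter, card_filter, mul_sum, ← sum_add_distrib, ← sum_add_distrib,
    ← sum_congr rfl fun B _ => hrank B]

theorem card_cycles_of_rank_le_three (hrank : ∀ B, D.rank B ≤ 3) :
    #D.cycles = #{B | D.rank B = 3} + #{B | D.rank B = 2} := by
  simp only [cycles, card_filter, ← sum_add_distrib]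
  refine sum_congr rfl fun B _ => ?_
  have := hrank B
  have := D.rank_pos B
  split_ifs <;> omega

theorem card_of_rank_le_three [Fintype V] (hG : G.Connected) (hrank : ∀ B, D.rank B ≤ 3) :
    Fintype.card V
      = 3 * #{B | D.rank B = 3} + 2 * #{B | D.rank B = 2} + #{B | D.rank B = 1} + 1 := by
  have hthree : ∑ B, (D.rank B - 2) = #{B | D.rank B = 3} := by
    rw [card_filter]
    refine sum_congr rfl fun B _ => ?_
    have := hrank B
    split_ifs <;> omega
  rw [D.card_eq hG, D.card_cycles_of_rank_le_three hrank, hthree]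
  ring

end Count

section Iso

variable {V W ι : Type*} {G : SimpleGraph V} {H : SimpleGraph W} (D : CactusDecomp G ι)

theorem exists_rank_eq_one_of_adj [Finite V] {v w : V} (hvw : G.Adj v w)
    (hv : ∀ u, G.Adj v u → u = w) : ∃ B, D.rank B = 1 := by
  classical
  cases nonempty_fintype V
  obtain ⟨B, hvB, -⟩ := D.exists_mem_of_adj hvw
  refine ⟨B, ?_⟩
  by_contra hB
  have hdeg : (D.block B).degree ⟨v, hvB⟩ ≤ #{w} := by
    rw [D.degree_block]
    exact card_le_card fun u hu => mem_singleton.mpr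
      (hv u ((G.mem_neighborFinset v u).mp (mem_inter.mp hu).1))
  rw [D.degree_block_eq, if_neg hB, card_singleton] at hdeg
  omega

variable [Fintype ι]

theorem nonempty_iso_of_bouquet {a b c : ℕ} (hub : ∃ z, ∀ B, z ∈ D.verts B)
    (hG : G.Connected) (hrank : ∀ B, D.rank B ≤ 3) (ha : #{B | D.rank B = 3} = a)
    (hb : #{B | D.rank B = 2} = b) (hc : #{B | D.rank B = 1} = c)
    (β : Bouquet H (bouquetRank a b c)) : Nonempty (G ≃g H) := by
  obtain ⟨β'⟩ := D.nonempty_bouquet hub hG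
  refine β'.nonempty_iso_of_card_eq β fun r => ?_
  rw [card_filter_bouquetRank]
  obtain h | rfl | rfl | rfl : (r = 0 ∨ 4 ≤ r) ∨ r = 1 ∨ r = 2 ∨ r = 3 := by omega
  · have hempty : #{B | D.rank B = r} = 0 := card_eq_zero.mpr (filter_eq_empty_iff.mpr fun B _ => by
      have := hrank B
      have := D.rank_pos B
      omega)
    rw [hempty]
    split_ifs <;> omega
  · simpa using hc
  · simpa using hb
  · simpa using ha

variable [Fintype V]

theorem exists_three_le_rank (hub : ∃ z, ∀ B, z ∈ D.verts B) (hG : G.Connected)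
    (hnot : ¬ Nonempty (G ≃g G0 (Fintype.card V) #D.cycles)) : ∃ B, 3 ≤ D.rank B := by
  by_contra! hlt
  have hrank (B) : D.rank B ≤ 3 := (hlt B).le
  have hthree : #{B | D.rank B = 3} = 0 :=
    card_eq_zero.mpr (filter_eq_empty_iff.mpr fun B _ => (hlt B).ne)
  have hcycles := D.card_cycles_of_rank_le_three hrank
  have hcard := D.card_of_rank_le_three hG hrank
  rw [hthree, zero_add] at hcycles
  rw [hthree, ← hcycles] at hcard
  exact hnot (D.nonempty_iso_of_bouquet hub hG hrank hthree hcycles.symm rfl (bouquetG0 hcard))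

theorem nonempty_iso_G5g (hub : ∃ z, ∀ B, z ∈ D.verts B) (hG : G.Connected)
    (hrank : ∀ B, D.rank B ≤ 3) (hthree : #{B | D.rank B = 3} = 1) :
    Nonempty (G ≃g G5g (Fintype.card V) #D.cycles) := by
  have hcard := D.card_of_rank_le_three hG hrank
  rw [hthree] at hcard
  rw [D.card_cycles_of_rank_le_three hrank, hthree, add_comm]
  exact D.nonempty_iso_of_bouquet hub hG hrank hthree rfl rfl (bouquetG5 hcard)

end Iso

section Equality

variable {V ι : Type*} {G : SimpleGraph V} [Fintype V] [Fintype ι] (D : CactusDecomp G ι)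

theorem two_mul_card_cycles_add_two_le (hG : G.Connected) (hcycles : 1 ≤ #D.cycles)
    (e : G ≃g G5g (Fintype.card V) #D.cycles) : 2 * #D.cycles + 2 ≤ Fintype.card V := by
  have hcard := D.card_eq hG
  by_contra! hlt
  let v : Fin (Fintype.card V) := ⟨2 * #D.cycles, by omega⟩
  let w : Fin (Fintype.card V) := ⟨2 * #D.cycles - 1, by omega⟩
  have hadj (u) : (G5g _ #D.cycles).Adj v u ↔ u = w := by
    have := u.isLt
    simp only [G5g, SimpleGraph.fromRel_adj, v, w, Fin.ext_iff, ne_eq, Nat.odd_iff, and_true,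
      true_and, not_true_eq_false, and_false, false_or]
    omega
  obtain ⟨B, hB⟩ := D.exists_rank_eq_one_of_adj (v := e.symm v) (w := e.symm w)
    (e.symm.map_adj_iff.mpr ((hadj w).mpr rfl))
    fun u hu => e.eq_symm_apply.mpr ((hadj _).mp (by simpa using e.map_adj_iff.mpr hu))
  have hpos : 0 < #{B | D.rank B = 1} := card_pos.mpr ⟨B, mem_filter_univ B |>.mpr hB⟩
  omega

end Equality

end CactusDecomp

theorem degRes_eq_of_iso_G5g {V : Type*} [Fintype V] {G : SimpleGraph V} {t : ℕ} (hG : G.Connected)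
    (hn : 7 ≤ Fintype.card V) (ht : 1 ≤ t) (hnt : 2 * t + 2 ≤ Fintype.card V)
    (e : G ≃g G5g (Fintype.card V) t) : degRes G = quadBouquetDegRes (Fintype.card V) t := by
  obtain ⟨s, rfl⟩ := Nat.exists_eq_add_of_le' ht
  obtain ⟨c, hc⟩ : ∃ c, Fintype.card V = 3 * 1 + 2 * s + c + 1 :=
    ⟨Fintype.card V - (2 * s + 4), by omega⟩
  let β := (bouquetG5 hc).map e.symm
  let D := β.cactusDecomp one_le_bouquetRank
  have hrank (i) : D.rank i ≤ 3 := by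
    rcases i with _ | _ | _
    exacts [le_rfl, Nat.le_succ 2, Nat.le_add_left 1 2]
  have hthree : #{i | D.rank i = 3} = 1 := card_filter_bouquetRank 3
  have htwo : #{i | D.rank i = 2} = s := (card_filter_bouquetRank 2).trans (by simp)
  have hcycles : #D.cycles = s + 1 := by
    rw [D.card_cycles_of_rank_le_three hrank, hthree, htwo, add_comm]
  rw [← hcycles]
  exact (D.degRes_eq_quadBouquetDegRes_iff (β.exists_forall_mem_verts one_le_bouquetRank) hG hn
    (by omega)).mpr ⟨hrank, hthree⟩

/-- Corollary 4.2: for `G ∈ Cact(n;t)` not isomorphic to `G⁰(n,t)`, with `n ≥ 7`,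
`t ≥ 1`, one has `D_R(G) ≥ -(4/3)t² + ((4/3)n - 13/3)t + 3n² - (16/3)n - 19/3`,
with equality iff `G ≅ G5`. -/
theorem stmt_12 (n t : ℕ) (hn : 7 ≤ n) (ht : 1 ≤ t)
    {V : Type*} [Finite V] (G : SimpleGraph V) (hG : MemCact n t G)
    (hnot : ¬ Nonempty (G ≃g G0 n t)) :
    -(4 / 3) * (t : ℝ) ^ 2 + ((4 / 3) * (n : ℝ) - 13 / 3) * t
        + 3 * (n : ℝ) ^ 2 - (16 / 3) * n - 19 / 3 ≤ degRes G ∧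
    (degRes G = -(4 / 3) * (t : ℝ) ^ 2 + ((4 / 3) * (n : ℝ) - 13 / 3) * t
        + 3 * (n : ℝ) ^ 2 - (16 / 3) * n - 19 / 3 ↔ Nonempty (G ≃g G5g n t)) := by
  classical
  cases nonempty_fintype V
  obtain ⟨hcactus, hcard, hcycles⟩ := hG
  have hconn := hcactus.1
  obtain ⟨D, hD⟩ := hcactus.exists_cactusDecomp
  let := Fintype.ofFinite {H : G.Subgraph // IsCactusBlock H}
  obtain rfl : #D.cycles = t := (CactusDecomp.card_cycles_eq_numCycles hD).trans hcycles
  obtain rfl : Fintype.card V = n := Nat.card_eq_fintype_card.symm.trans hcard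
  change quadBouquetDegRes _ _ ≤ _ ∧ (_ = quadBouquetDegRes _ _ ↔ _)
  have heq : Nonempty (G ≃g G5g (Fintype.card V) #D.cycles) → degRes G = quadBouquetDegRes _ _ :=
    fun ⟨e⟩ => degRes_eq_of_iso_G5g hconn hn ht (D.two_mul_card_cycles_add_two_le hconn ht e) e
  by_cases hub : ∃ z, ∀ B, z ∈ D.verts B
  · obtain ⟨B, hB⟩ := D.exists_three_le_rank hub hconn hnot
    refine ⟨D.quadBouquetDegRes_le_degRes hub hconn hn ht hB, fun h => ?_, heq⟩
    obtain ⟨hrank, hthree⟩ := (D.degRes_eq_quadBouquetDegRes_iff hub hconn hn ht).mp h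
    exact D.nonempty_iso_G5g hub hconn hrank hthree
  · obtain ⟨B, x, y, hx, hy, hxy⟩ : ∃ B, ∃ x y : (D.verts B : Set V),
        (D.branch B x).Nonempty ∧ (D.branch B y).Nonempty ∧ x ≠ y := by
      contrapose! hub
      exact D.exists_forall_mem_verts hconn D.one_lt_card_verts hub
    have hlt := D.quadBouquetDegRes_lt_degRes hconn hn ht hxy hx hy
    exact ⟨hlt.le, fun h => absurd h hlt.ne', heq⟩
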